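/- On the event E, under Condition (H) in the sparse-unlearnable regime, suppose the maximum shifted noise coefficient satisfies ρ̂_max^{(t)} ≤ C_1/((mP)^{1/3} σ_n² d). Then the one-step dynamics satisfy both ρ̂_max^{(t+1)} ≥ ρ̂_max^{(t)} + (η σ_n⁴ d² / (3N(1+exp(4C_1³))))·(ρ̂_max^{(t)})² and ρ̂_max^{(t+1)} ≤ ρ̂_max^{(t)} + (4800 η σ_n⁴ d² log(16NmP/δ)/N)·(ρ̂_max^{(t)})². -/

import Mathlib

open Finset MeasureTheory ProbabilityTheory
open scoped ENNReal NNReal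

noncomputable section

namespace AD

/-- Cubic ReLU activation. -/
def phi (z : ℝ) : ℝ := (max 0 z) ^ 3

/-- Negative sigmoid `ψ(z) = 1/(1+e^z)`. -/
def psi (z : ℝ) : ℝ := 1 / (1 + Real.exp z)

/-- Logistic loss `ℓ(z) = log(1+e^{-z})`. -/
def lloss (z : ℝ) : ℝ := Real.log (1 + Real.exp (-z))

/-- Logistic sigmoid `σ(z) = 1/(1+e^{-z})`. -/
def sigm (z : ℝ) : ℝ := 1 / (1 + Real.exp (-z))

/-- Euclidean inner product on `Fin d → ℝ`. -/
def dot {d : ℕ} (a b : Fin d → ℝ) : ℝ := ∑ k, a k * b k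

/-- Squared Euclidean norm. -/
def sqnorm {d : ℕ} (a : Fin d → ℝ) : ℝ := dot a a

/-- First standard basis vector `e₁` (the learnable feature `u`). -/
def e1 (d : ℕ) (hd : 0 < d) : Fin d → ℝ := fun k => if k = (⟨0, hd⟩ : Fin d) then 1 else 0

/-- Last standard basis vector `e_d` (the unlearnable feature `v`). -/
def eLast (d : ℕ) (_hd : 0 < d) : Fin d → ℝ := fun k => if (k : ℕ) = d - 1 then 1 else 0

/-- The two-layer student network
`f_W(X) = ∑_r ∑_p [φ(⟨w_r,x_p⟩) − φ(−⟨w_r,x_p⟩)]`. -/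
def netOut {m P d : ℕ} (w : Fin m → Fin d → ℝ) (X : Fin P → Fin d → ℝ) : ℝ :=
  ∑ r, ∑ p, (phi (dot (w r) (X p)) - phi (-(dot (w r) (X p))))

/-- The concentration event `E` of the paper, i.e. properties (P1)–(P8), stated for
training patches `x`, initialization `w0`, labels `y` and signal-patch indices `sig`. -/
def EventEOn (N m P d : ℕ) (hd : 0 < d) (sigman sigma0 delta : ℝ)
    (y : Fin N → ℝ) (sig : Fin N → Fin P)
    (x : Fin N → Fin P → Fin d → ℝ) (w0 : Fin m → Fin d → ℝ) : Prop :=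
  -- (P1) noise-patch norms
  (∀ i j, j ≠ sig i →
      sigman ^ 2 * d / 2 ≤ sqnorm (x i j) ∧ sqnorm (x i j) ≤ 3 * sigman ^ 2 * d / 2) ∧
  -- (P2) pairwise noise inner products
  (∀ i k j q, j ≠ sig i → q ≠ sig k → ((i, j) : Fin N × Fin P) ≠ (k, q) →
      |dot (x i j) (x k q)| ≤
        2 * sigman ^ 2 * Real.sqrt ((d : ℝ) * Real.log ((16 : ℝ) * N ^ 2 * P ^ 2 / delta))) ∧
  -- (P3) sup-norm of noise patches
  (∀ i j, j ≠ sig i → ∀ kk : Fin d,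
      |x i j kk| ≤ sigman * Real.sqrt (2 * Real.log ((16 : ℝ) * d * N * P / delta))) ∧
  -- (P4) initialization norms
  (∀ r, Real.sqrt (sqnorm (w0 r)) ≤ 2 * sigma0 * Real.sqrt d) ∧
  -- (P5) initialization signal correlation
  (∀ r, |dot (w0 r) (e1 d hd)| ≤ sigma0 * Real.sqrt (2 * Real.log ((16 : ℝ) * m / delta))) ∧
  -- (P6) initialization noise correlations
  (∀ r i j, j ≠ sig i →
      |dot (w0 r) (x i j)| ≤
        2 * sigma0 * sigman * Real.sqrt ((d : ℝ) * Real.log ((16 : ℝ) * N * m * P / delta))) ∧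
  -- (P7) maximal initial signal alignment
  (∃ r, sigma0 / 2 ≤ dot (w0 r) (e1 d hd)) ∧
  -- (P8) maximal initial noise alignment
  (∀ i j, j ≠ sig i → ∃ r, sigma0 * sigman * Real.sqrt d / 4 ≤ y i * dot (w0 r) (x i j))
structure Setting where
  N : ℕ
  m : ℕ
  P : ℕ
  d : ℕ
  T : ℕ
  hN : 0 < N
  hm : 0 < m
  hP : 0 < P
  hd : 0 < d
  alpha : ℝ
  sigman : ℝ
  sigma0 : ℝ
  eta : ℝ
  eps : ℝ
  delta : ℝ
  halpha : 0 < alpha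
  hsigman : 0 < sigman
  hsigma0 : 0 < sigma0
  heta : 0 < eta
  heps : 0 < eps
  hepsalpha : eps < alpha
  hdelta0 : 0 < delta
  hdelta1 : delta < 1
  /-- labels -/
  y : Fin N → ℝ
  hy : ∀ i, y i = 1 ∨ y i = -1
  /-- signal patch index -/
  sig : Fin N → Fin P
  /-- learnable samples -/
  SL : Finset (Fin N)
  /-- unlearnable samples -/
  SU : Finset (Fin N)
  hunion : SL ∪ SU = Finset.univ
  hdisj : Disjoint SL SU
  /-- training patches -/
  x : Fin N → Fin P → Fin d → ℝ
  hsigL : ∀ i ∈ SL, x i (sig i) = (alpha * y i) • e1 d hd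
  hsigU : ∀ i ∈ SU, x i (sig i) = (alpha * y i) • eLast d hd
  hnoiseU : ∀ i j, j ≠ sig i → dot (x i j) (e1 d hd) = 0
  hnoiseV : ∀ i j, j ≠ sig i → dot (x i j) (eLast d hd) = 0
  /-- weight trajectory -/
  w : ℕ → Fin m → Fin d → ℝ
  hwperp : ∀ t r, dot (w t r) (eLast d hd) = 0
  /-- adversarial training examples at each iteration -/
  xadv : ℕ → Fin N → Fin P → Fin d → ℝ
  hadvnoise : ∀ t i j, j ≠ sig i → xadv t i j = x i j
  hadvspan : ∀ t i, ∃ c : ℝ, xadv t i (sig i) - x i (sig i) = c • x i (sig i)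
  hadvlinf : ∀ t i p k, |xadv t i p k - x i p k| ≤ eps
  hadvlearn : ∀ t : ℕ, ∀ i ∈ SL,
    alpha - eps ≤ y i * dot (xadv t i (sig i)) (e1 d hd) ∧
      y i * dot (xadv t i (sig i)) (e1 d hd) ≤ alpha

namespace Setting

variable (S : Setting)

/-- Adversarial margin `y_i f_{W^{(t)}}(X̃_i^{(t)})`. -/
def marg (t : ℕ) (i : Fin S.N) : ℝ := S.y i * netOut (S.w t) (S.xadv t i)

/-- Signal coordinate `w_{r,1}^{(t)}`. -/
def wsig (t : ℕ) (r : Fin S.m) : ℝ := S.w t r ⟨0, S.hd⟩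

/-- Unlearnable fraction `p_un = |S_U|/N`. -/
def pun : ℝ := (S.SU.card : ℝ) / S.N

/-- The adversarial-training gradient-descent dynamics. -/
def ATDyn : Prop :=
  ∀ t r, S.w (t + 1) r = S.w t r +
    (3 * S.eta / S.N) •
      ∑ i : Fin S.N, (psi (S.marg t i) * S.y i) •
        ∑ p : Fin S.P, (dot (S.w t r) (S.xadv t i p)) ^ 2 • S.xadv t i p

/-- The signed gradient weight of sample `i` at iteration `t` under adversarial
distillation from teacher logits `fT`. -/
def gAD (fT : Fin S.N → ℝ) (t : ℕ) (i : Fin S.N) : ℝ :=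
  sigm (S.y i * fT i) * psi (S.marg t i) - sigm (-(S.y i * fT i)) * psi (-(S.marg t i))

/-- The adversarial-distillation gradient-descent dynamics. -/
def ADDyn (fT : Fin S.N → ℝ) : Prop :=
  ∀ t r, S.w (t + 1) r = S.w t r +
    (3 * S.eta / S.N) •
      ∑ i : Fin S.N, (S.gAD fT t i * S.y i) •
        ∑ p : Fin S.P, (dot (S.w t r) (S.xadv t i p)) ^ 2 • S.xadv t i p

/-- Noise coefficients `ρ_{i,j,r}^{(t)}` (adversarial training). -/
def rho (i : Fin S.N) (j : Fin S.P) (r : Fin S.m) : ℕ → ℝ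
  | 0 => 0
  | t + 1 => rho i j r t + (3 * S.eta / S.N) * psi (S.marg t i) * (dot (S.w t r) (S.x i j)) ^ 2

/-- Noise coefficients under adversarial distillation. -/
def rhoAD (fT : Fin S.N → ℝ) (i : Fin S.N) (j : Fin S.P) (r : Fin S.m) : ℕ → ℝ
  | 0 => 0
  | t + 1 => rhoAD fT i j r t + (3 * S.eta / S.N) * S.gAD fT t i * (dot (S.w t r) (S.x i j)) ^ 2

/-- The event `E` for a setting. -/
def EventE : Prop :=
  EventEOn S.N S.m S.P S.d S.hd S.sigman S.sigma0 S.delta S.y S.sig S.x (S.w 0)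

/-- Condition (H): the parameter requirements of Condition 4.1 of the paper
(without the unlearnable-fraction regime item, which is imposed separately). -/
def CondH (C : ℝ) : Prop :=
  1 ≤ C ∧
  -- training horizon
  C * S.N / (S.eta * S.sigma0 * S.sigman ^ 3 * ((S.d : ℝ) * Real.sqrt S.d)) ≤ (S.T : ℝ) ∧
  -- dimension
  C * S.m ^ 2 * S.P ^ 2 * S.N ^ 2 *
      (Real.log ((S.T : ℝ) * S.N * S.m * S.P / S.delta)) ^ 4 ≤ (S.d : ℝ) ∧
  -- signal strength
  C * S.sigman * Real.sqrt S.d * Real.log ((S.T : ℝ) * S.N * S.m * S.P / S.delta) /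
      (((S.N : ℝ) * (1 - S.pun)) ^ ((1 : ℝ) / 3)) ≤ S.alpha ∧
  -- initialization scale
  S.sigma0 ≤
    C⁻¹ *
        min (min (1 / ((S.m : ℝ) ^ ((2 : ℝ) / 3) * (S.P : ℝ) ^ ((2 : ℝ) / 3) *
            S.sigman * Real.sqrt S.d))
          (1 / (S.alpha * (S.m : ℝ) ^ ((2 : ℝ) / 3))))
          (1 / (S.sigman * S.m ^ 2 * Real.sqrt S.P * S.d)) /
      Real.log ((S.T : ℝ) * S.d * S.N * S.m * S.P / S.delta) ∧
  -- learning rate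
  S.eta ≤
    C⁻¹ * min (min (1 / (S.alpha ^ 3 * S.sigma0)) (1 / (S.sigman ^ 2 * S.d))) (1 / S.alpha ^ 2) /
      Real.log ((S.T : ℝ) * S.N * S.m * S.P / S.delta) ∧
  -- adversarial budget
  C * S.sigman * S.m * Real.sqrt S.P * Real.log ((S.T : ℝ) * S.d * S.N * S.P / S.delta) ≤ S.eps ∧
  S.eps < C⁻¹ * min S.alpha (1 / (S.m * S.sigma0 * S.d)) ∧
  -- width and number of patches
  C * Real.log ((S.N : ℝ) * S.P / S.delta) ≤ (S.m : ℝ) ∧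
  (S.m : ℝ) ≤ C * Real.log S.d ^ C ∧
  2 ≤ S.P ∧ (S.P : ℝ) ≤ C

/-- The sparse-unlearnable regime of Condition 4.1. -/
def SparseRegime (C : ℝ) : Prop :=
  C / S.N ≤ S.pun ∧ S.pun ≤ C⁻¹ * Real.log S.d / S.N ∧
  C * S.m * S.P * Real.log ((S.T : ℝ) * S.d * S.N * S.m * S.P / S.delta) ≤ (S.N : ℝ)

/-- The noise-stability bound (NS) on learnable samples at iteration `t`. -/
def NS (t : ℕ) : Prop :=
  ∀ r : Fin S.m, ∀ i ∈ S.SL, ∀ j, j ≠ S.sig i →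
    |dot (S.w t r) (S.x i j)| ≤
      3 * S.sigma0 * S.sigman *
          Real.sqrt ((S.d : ℝ) * Real.log ((16 : ℝ) * S.N * S.m * S.P / S.delta)) +
        21 * S.pun * S.N * S.P * Real.log S.T ^ ((1 : ℝ) / 3) / Real.sqrt S.d *
          Real.sqrt (Real.log ((16 : ℝ) * S.N ^ 2 * S.P ^ 2 / S.delta))

/-- The signal-learning hitting time `T₀`. -/
def T0 (C0 : ℝ) : ℕ :=
  sInf {t : ℕ | ∃ r, C0 / (S.alpha * (S.m : ℝ) ^ ((1 : ℝ) / 3)) < S.wsig t r}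

/-- Maximum of the noise coefficients over unlearnable noise patches. -/
def rhoMaxSU (t : ℕ) : ℝ :=
  sSup {z : ℝ | ∃ r : Fin S.m, ∃ k ∈ S.SU, ∃ q, q ≠ S.sig k ∧ z = S.rho k q r t}

/-- Shifted noise coefficients `ρ̂_{i,j,r}^{(t)}`. -/
def rhoHat (i : Fin S.N) (j : Fin S.P) (r : Fin S.m) (t : ℕ) : ℝ :=
  S.rho i j r t + S.y i * dot (S.w 0 r) (S.x i j) / sqnorm (S.x i j)

/-- Maximum shifted noise coefficient over unlearnable noise patches. -/
def rhoHatMax (t : ℕ) : ℝ :=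
  sSup {z : ℝ | ∃ r : Fin S.m, ∃ k ∈ S.SU, ∃ q, q ≠ S.sig k ∧ z = S.rhoHat k q r t}

/-- The noise-memorization hitting time `T₁`. -/
def T1 (C1 : ℝ) : ℕ :=
  sInf {t : ℕ | C1 / (((S.m : ℝ) * S.P) ^ ((1 : ℝ) / 3) * S.sigman ^ 2 * S.d) < S.rhoHatMax t}

/-- The Good-Teacher horizon `T_max`. -/
def Tmax : ℝ :=
  S.N / (1000 * S.eta * S.m * S.P * S.sigma0 ^ 4 * S.sigman ^ 6 * (S.d : ℝ) ^ 3 *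
    Real.log ((16 : ℝ) * S.N * S.m * S.P / S.delta) ^ 2)

end Setting

/-! ### Elementary facts about the activation, the sigmoid and the inner product -/

lemma phi_sub_phi_neg (z : ℝ) : phi z - phi (-z) = z ^ 3 := by
  unfold phi
  rcases le_total 0 z with h | h
  · rw [max_eq_right h, max_eq_left (by linarith)]; ring
  · rw [max_eq_left h, max_eq_right (by linarith)]; ring

lemma psi_nonneg (z : ℝ) : 0 ≤ psi z := by unfold psi; positivity

lemma psi_le_one (z : ℝ) : psi z ≤ 1 := by
  unfold psi
  rw [div_le_one (by positivity)]
  linarith [Real.exp_pos z]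

lemma one_div_le_psi {z M : ℝ} (h : z ≤ M) : 1 / (1 + Real.exp M) ≤ psi z := by
  unfold psi
  gcongr

lemma psi_le_exp_neg (z : ℝ) : psi z ≤ Real.exp (-z) := by
  unfold psi
  rw [Real.exp_neg, one_div]
  gcongr
  linarith

section Dot

variable {d : ℕ}

lemma dot_comm (a b : Fin d → ℝ) : dot a b = dot b a := by
  simp [dot, mul_comm]

lemma dot_add_left (a b c : Fin d → ℝ) : dot (a + b) c = dot a c + dot b c := by
  simp [dot, add_mul, Finset.sum_add_distrib]

lemma dot_smul_left (k : ℝ) (a b : Fin d → ℝ) : dot (k • a) b = k * dot a b := by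
  simp [dot, Finset.mul_sum, mul_assoc]

lemma dot_smul_right (k : ℝ) (a b : Fin d → ℝ) : dot a (k • b) = k * dot a b := by
  rw [dot_comm, dot_smul_left, dot_comm]

lemma dot_sum_left {ι : Type*} (s : Finset ι) (f : ι → Fin d → ℝ) (c : Fin d → ℝ) :
    dot (∑ i ∈ s, f i) c = ∑ i ∈ s, dot (f i) c := by
  simp only [dot, Finset.sum_apply, Finset.sum_mul]
  exact Finset.sum_comm

lemma dot_e1 (hd : 0 < d) (a : Fin d → ℝ) : dot a (e1 d hd) = a ⟨0, hd⟩ := by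
  simp [dot, e1]

lemma dot_e1_e1 (hd : 0 < d) : dot (e1 d hd) (e1 d hd) = 1 := by
  simp [dot_e1, e1]

end Dot

namespace Setting

variable (S : Setting)

/-! ### Exact dynamics of the signal and noise coordinates -/

/-- Indices of the noise patches of sample `i`. -/
def noise (i : Fin S.N) : Finset (Fin S.P) := Finset.univ.erase (S.sig i)

lemma mem_noise {i : Fin S.N} {j : Fin S.P} : j ∈ S.noise i ↔ j ≠ S.sig i := by
  simp [noise]

lemma sum_patches (i : Fin S.N) {β : Type*} [AddCommMonoid β] (f : Fin S.P → β) :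
    ∑ p, f p = f (S.sig i) + ∑ j ∈ S.noise i, f j :=
  (Finset.add_sum_erase _ f (Finset.mem_univ _)).symm

/-- Effective signal strength of the adversarial example of sample `i`. -/
def asig (t : ℕ) (i : Fin S.N) : ℝ := S.y i * dot (S.xadv t i (S.sig i)) (e1 S.d S.hd)

lemma y_sq (i : Fin S.N) : S.y i ^ 2 = 1 := by
  rcases S.hy i with h | h <;> rw [h] <;> norm_num

lemma abs_y (i : Fin S.N) : |S.y i| = 1 := by
  rcases S.hy i with h | h <;> rw [h] <;> norm_num

lemma y_cube_mul (i : Fin S.N) (z : ℝ) : S.y i * z ^ 3 = (S.y i * z) ^ 3 := by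
  rcases S.hy i with h | h <;> rw [h] <;> ring

lemma mem_SL_or_SU (i : Fin S.N) : i ∈ S.SL ∨ i ∈ S.SU := by
  rw [← Finset.mem_union, S.hunion]; exact Finset.mem_univ i

lemma sum_samples {β : Type*} [AddCommMonoid β] (f : Fin S.N → β) :
    ∑ i, f i = ∑ i ∈ S.SL, f i + ∑ i ∈ S.SU, f i := by
  rw [← S.hunion, Finset.sum_union S.hdisj]

lemma xadv_sig (t : ℕ) (i : Fin S.N) :
    ∃ c : ℝ, S.xadv t i (S.sig i) = c • S.x i (S.sig i) := by
  obtain ⟨c, hc⟩ := S.hadvspan t i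
  exact ⟨c + 1, by rw [add_smul, one_smul, ← hc]; abel⟩

lemma xadv_sig_SL (t : ℕ) {i : Fin S.N} (hi : i ∈ S.SL) :
    S.xadv t i (S.sig i) = (S.y i * S.asig t i) • e1 S.d S.hd := by
  obtain ⟨c, hc⟩ := S.xadv_sig t i
  rw [S.hsigL i hi, smul_smul] at hc
  have : S.y i * S.asig t i = c * (S.alpha * S.y i) := by
    rw [asig, hc, dot_smul_left, dot_e1_e1, ← mul_assoc, ← sq, y_sq]; ring
  rw [this, hc]

lemma xadv_sig_SU (t : ℕ) {i : Fin S.N} (hi : i ∈ S.SU) :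
    ∃ c : ℝ, S.xadv t i (S.sig i) = c • eLast S.d S.hd := by
  obtain ⟨c, hc⟩ := S.xadv_sig t i
  exact ⟨_, by rw [hc, S.hsigU i hi, smul_smul]⟩

lemma dot_xadv_sig_SL (t : ℕ) (r : Fin S.m) {i : Fin S.N} (hi : i ∈ S.SL) :
    dot (S.w t r) (S.xadv t i (S.sig i)) = S.y i * S.asig t i * S.wsig t r := by
  rw [S.xadv_sig_SL t hi, dot_smul_right, dot_e1, wsig]

lemma dot_xadv_sig_SU (t : ℕ) (r : Fin S.m) {i : Fin S.N} (hi : i ∈ S.SU) :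
    dot (S.w t r) (S.xadv t i (S.sig i)) = 0 := by
  obtain ⟨c, hc⟩ := S.xadv_sig_SU t hi
  rw [hc, dot_smul_right, S.hwperp, mul_zero]

lemma netOut_eq (w : Fin S.m → Fin S.d → ℝ) (X : Fin S.P → Fin S.d → ℝ) :
    netOut w X = ∑ r, ∑ p, dot (w r) (X p) ^ 3 := by
  simp only [netOut, phi_sub_phi_neg]

lemma marg_eq (t : ℕ) (i : Fin S.N) :
    S.marg t i = ∑ r, ((S.y i * dot (S.w t r) (S.xadv t i (S.sig i))) ^ 3 +
      ∑ j ∈ S.noise i, (S.y i * dot (S.w t r) (S.x i j)) ^ 3) := by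
  rw [marg, netOut_eq, Finset.mul_sum]
  refine Finset.sum_congr rfl fun r _ => ?_
  rw [S.sum_patches i, mul_add, y_cube_mul, Finset.mul_sum]
  congr 1
  refine Finset.sum_congr rfl fun j hj => ?_
  rw [S.hadvnoise t i j (S.mem_noise.1 hj), y_cube_mul]

lemma marg_SL (t : ℕ) {i : Fin S.N} (hi : i ∈ S.SL) :
    S.marg t i = ∑ r, ((S.asig t i * S.wsig t r) ^ 3 +
      ∑ j ∈ S.noise i, (S.y i * dot (S.w t r) (S.x i j)) ^ 3) := by
  rw [marg_eq]
  refine Finset.sum_congr rfl fun r _ => ?_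
  rw [S.dot_xadv_sig_SL t r hi, ← mul_assoc, ← mul_assoc, ← sq, y_sq, one_mul]

lemma marg_SU (t : ℕ) {i : Fin S.N} (hi : i ∈ S.SU) :
    S.marg t i = ∑ r, ∑ j ∈ S.noise i, (S.y i * dot (S.w t r) (S.x i j)) ^ 3 := by
  rw [marg_eq]
  refine Finset.sum_congr rfl fun r _ => ?_
  rw [S.dot_xadv_sig_SU t r hi]
  simp

/-- Signal growth rate: `w_{r,1}^{(t+1)} = w_{r,1}^{(t)} + g_t (w_{r,1}^{(t)})²`. -/
def gsig (t : ℕ) : ℝ :=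
  3 * S.eta / S.N * ∑ i ∈ S.SL, psi (S.marg t i) * S.asig t i ^ 3

variable {S}

lemma ATDyn.dot_succ (h : S.ATDyn) (t : ℕ) (r : Fin S.m) (b : Fin S.d → ℝ) :
    dot (S.w (t + 1) r) b = dot (S.w t r) b + 3 * S.eta / S.N *
      ∑ i, psi (S.marg t i) * S.y i *
        (dot (S.w t r) (S.xadv t i (S.sig i)) ^ 2 * dot (S.xadv t i (S.sig i)) b +
          ∑ j ∈ S.noise i, dot (S.w t r) (S.x i j) ^ 2 * dot (S.x i j) b) := by
  rw [h t r, dot_add_left, dot_smul_left, dot_sum_left]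
  congr 2
  refine Finset.sum_congr rfl fun i _ => ?_
  rw [dot_smul_left, dot_sum_left, S.sum_patches i, dot_smul_left]
  congr 2
  refine Finset.sum_congr rfl fun j hj => ?_
  rw [S.hadvnoise t i j (S.mem_noise.1 hj), dot_smul_left]

lemma ATDyn.wsig_succ (h : S.ATDyn) (t : ℕ) (r : Fin S.m) :
    S.wsig (t + 1) r = S.wsig t r + S.gsig t * S.wsig t r ^ 2 := by
  have key := h.dot_succ t r (e1 S.d S.hd)
  rw [dot_e1, dot_e1] at key
  rw [wsig, key, wsig, gsig, mul_assoc]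
  congr 2
  rw [S.sum_samples, Finset.sum_eq_zero (s := S.SU), add_zero, Finset.sum_mul]
  · refine Finset.sum_congr rfl fun i hi => ?_
    rw [Finset.sum_eq_zero, add_zero, S.dot_xadv_sig_SL t r hi, S.xadv_sig_SL t hi,
      dot_smul_left, dot_e1_e1, wsig]
    · linear_combination (psi (S.marg t i) * S.asig t i ^ 3 * S.w t r ⟨0, S.hd⟩ ^ 2 *
        (S.y i ^ 2 + 1)) * S.y_sq i
    · intro j hj
      rw [S.hnoiseU i j (S.mem_noise.1 hj), mul_zero]
  · intro i hi
    rw [Finset.sum_eq_zero, S.dot_xadv_sig_SU t r hi]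
    · ring
    · intro j hj
      rw [S.hnoiseU i j (S.mem_noise.1 hj), mul_zero]

lemma dot_xadv_sig_noise (t : ℕ) (i k : Fin S.N) {q : Fin S.P} (hq : q ≠ S.sig k) :
    dot (S.xadv t i (S.sig i)) (S.x k q) = 0 := by
  rcases S.mem_SL_or_SU i with hi | hi
  · rw [S.xadv_sig_SL t hi, dot_smul_left, dot_comm, S.hnoiseU k q hq, mul_zero]
  · obtain ⟨c, hc⟩ := S.xadv_sig_SU t hi
    rw [hc, dot_smul_left, dot_comm, S.hnoiseV k q hq, mul_zero]

lemma ATDyn.dot_noise (h : S.ATDyn) (t : ℕ) (r : Fin S.m) (k : Fin S.N) {q : Fin S.P}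
    (hq : q ≠ S.sig k) :
    dot (S.w t r) (S.x k q) = dot (S.w 0 r) (S.x k q) +
      ∑ i, ∑ j ∈ S.noise i, S.y i * S.rho i j r t * dot (S.x i j) (S.x k q) := by
  induction t with
  | zero => simp [rho]
  | succ t ih =>
    rw [h.dot_succ, ih, add_assoc, Finset.mul_sum, ← Finset.sum_add_distrib]
    congr 1
    refine Finset.sum_congr rfl fun i _ => ?_
    rw [dot_xadv_sig_noise t i k hq, mul_zero, zero_add, Finset.mul_sum, Finset.mul_sum,
      ← Finset.sum_add_distrib]
    refine Finset.sum_congr rfl fun j _ => ?_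
    simp only [rho]
    ring

lemma rate_nonneg (S : Setting) : 0 ≤ 3 * S.eta / S.N := by
  have := S.heta
  positivity

lemma rho_le_succ (i : Fin S.N) (j : Fin S.P) (r : Fin S.m) (t : ℕ) :
    S.rho i j r t ≤ S.rho i j r (t + 1) := by
  have := mul_nonneg (mul_nonneg S.rate_nonneg (psi_nonneg (S.marg t i)))
    (sq_nonneg (dot (S.w t r) (S.x i j)))
  simp only [rho]
  linarith

lemma rho_nonneg (i : Fin S.N) (j : Fin S.P) (r : Fin S.m) (t : ℕ) : 0 ≤ S.rho i j r t :=
  monotone_nat_of_le_succ (f := S.rho i j r) (rho_le_succ i j r) (Nat.zero_le t)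

lemma rho_eq_sum (i : Fin S.N) (j : Fin S.P) (r : Fin S.m) (t : ℕ) :
    S.rho i j r t = ∑ s ∈ Finset.range t,
      3 * S.eta / S.N * psi (S.marg s i) * dot (S.w s r) (S.x i j) ^ 2 := by
  induction t with
  | zero => simp [rho]
  | succ t ih => rw [Finset.sum_range_succ, ← ih, rho]

/-- Total noise coefficient of neuron `r`. -/
def rhoSum (S : Setting) (r : Fin S.m) (t : ℕ) : ℝ := ∑ i, ∑ j ∈ S.noise i, S.rho i j r t

lemma ATDyn.abs_dot_noise_sub_le (h : S.ATDyn) {X : ℝ} (hX : 0 ≤ X)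
    (hcross : ∀ i k j q, j ≠ S.sig i → q ≠ S.sig k → ((i, j) : Fin S.N × Fin S.P) ≠ (k, q) →
      |dot (S.x i j) (S.x k q)| ≤ X)
    (t : ℕ) (r : Fin S.m) (k : Fin S.N) {q : Fin S.P} (hq : q ≠ S.sig k) :
    |S.y k * dot (S.w t r) (S.x k q) -
      (S.y k * dot (S.w 0 r) (S.x k q) + S.rho k q r t * sqnorm (S.x k q))| ≤
      X * S.rhoSum r t := by
  classical
  have hsplit : S.y k * dot (S.w t r) (S.x k q) -
      (S.y k * dot (S.w 0 r) (S.x k q) + S.rho k q r t * sqnorm (S.x k q)) =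
      ∑ i, ∑ j ∈ S.noise i, if (i, j) = (k, q) then 0 else
        S.y k * (S.y i * S.rho i j r t * dot (S.x i j) (S.x k q)) := by
    have hpt : ∀ i j, S.y k * (S.y i * S.rho i j r t * dot (S.x i j) (S.x k q)) =
        (if (i, j) = (k, q) then 0 else
          S.y k * (S.y i * S.rho i j r t * dot (S.x i j) (S.x k q))) +
        if i = k then if j = q then S.rho k q r t * sqnorm (S.x k q) else 0 else 0 := by
      intro i j
      by_cases hi : i = k
      · subst hi
        by_cases hj : j = q
        · subst hj
          simp only [if_true, sqnorm]
          linear_combination (S.rho i j r t * dot (S.x i j) (S.x i j)) * S.y_sq i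
        · simp [hj]
      · simp [hi]
    rw [h.dot_noise t r k hq, mul_add, Finset.mul_sum]
    simp_rw [Finset.mul_sum]
    rw [Finset.sum_congr rfl fun i _ => Finset.sum_congr rfl fun j _ => hpt i j]
    simp_rw [Finset.sum_add_distrib]
    have : ∑ i, ∑ j ∈ S.noise i,
        (if i = k then if j = q then S.rho k q r t * sqnorm (S.x k q) else 0 else 0) =
        S.rho k q r t * sqnorm (S.x k q) := by
      rw [Finset.sum_eq_single k]
      · simp [S.mem_noise, hq]
      · intro b _ hb; simp [hb]
      · simp
    rw [this]
    ring
  rw [hsplit, rhoSum, Finset.mul_sum]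
  refine (Finset.abs_sum_le_sum_abs _ _).trans (Finset.sum_le_sum fun i _ => ?_)
  rw [Finset.mul_sum]
  refine (Finset.abs_sum_le_sum_abs _ _).trans (Finset.sum_le_sum fun j hj => ?_)
  have hr := rho_nonneg (S := S) i j r t
  split_ifs with hij
  · simpa using mul_nonneg hX hr
  · rw [abs_mul, abs_mul, abs_mul, S.abs_y, S.abs_y, abs_of_nonneg hr, one_mul, one_mul, mul_comm]
    exact mul_le_mul_of_nonneg_right (hcross i k j q (S.mem_noise.1 hj) hq hij) hr

/-! ### The maximum shifted coefficient -/

/-- The set over which `rhoHatMax` is the supremum. -/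
def rhoHatSet (S : Setting) (t : ℕ) : Set ℝ :=
  {z : ℝ | ∃ r : Fin S.m, ∃ k ∈ S.SU, ∃ q, q ≠ S.sig k ∧ z = S.rhoHat k q r t}

lemma rhoHatSet_finite (t : ℕ) : (S.rhoHatSet t).Finite := by
  refine (Set.finite_range fun z : Fin S.m × Fin S.N × Fin S.P =>
    S.rhoHat z.2.1 z.2.2 z.1 t).subset ?_
  rintro z ⟨r, k, -, q, -, rfl⟩
  exact ⟨(r, k, q), rfl⟩

lemma rhoHat_le_rhoHatMax {k : Fin S.N} (hk : k ∈ S.SU) {q : Fin S.P} (hq : q ≠ S.sig k)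
    (r : Fin S.m) (t : ℕ) : S.rhoHat k q r t ≤ S.rhoHatMax t :=
  le_csSup (rhoHatSet_finite t).bddAbove ⟨r, k, hk, q, hq, rfl⟩

lemma exists_noise (hP : 2 ≤ S.P) (k : Fin S.N) : ∃ q, q ≠ S.sig k := by
  have : Nontrivial (Fin S.P) := Fin.nontrivial_iff_two_le.2 hP
  exact exists_ne (S.sig k)

lemma rhoHatSet_nonempty (hP : 2 ≤ S.P) (hSU : S.SU.Nonempty) (t : ℕ) :
    (S.rhoHatSet t).Nonempty := by
  obtain ⟨k, hk⟩ := hSU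
  obtain ⟨q, hq⟩ := exists_noise hP k
  exact ⟨_, ⟨0, S.hm⟩, k, hk, q, hq, rfl⟩

lemma exists_rhoHatMax_eq (hP : 2 ≤ S.P) (hSU : S.SU.Nonempty) (t : ℕ) :
    ∃ r : Fin S.m, ∃ k ∈ S.SU, ∃ q, q ≠ S.sig k ∧ S.rhoHatMax t = S.rhoHat k q r t :=
  (rhoHatSet_nonempty hP hSU t).csSup_mem (rhoHatSet_finite t)

lemma rhoHatMax_le_succ (hP : 2 ≤ S.P) (hSU : S.SU.Nonempty) (t : ℕ) :
    S.rhoHatMax t ≤ S.rhoHatMax (t + 1) := by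
  obtain ⟨r, k, hk, q, hq, h⟩ := exists_rhoHatMax_eq hP hSU t
  rw [h]
  refine le_trans ?_ (rhoHat_le_rhoHatMax hk hq r (t + 1))
  have := rho_le_succ (S := S) k q r t
  simp only [rhoHat]
  linarith

lemma rhoHatMax_mono (hP : 2 ≤ S.P) (hSU : S.SU.Nonempty) : Monotone S.rhoHatMax :=
  monotone_nat_of_le_succ (rhoHatMax_le_succ hP hSU)

/-! ### Normalized parameters -/

/-- Typical norm of a noise patch. -/
def qn (S : Setting) : ℝ := S.sigman * Real.sqrt S.d

/-- The logarithmic factor of Condition (H). -/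
def lgT (S : Setting) : ℝ := Real.log ((S.T : ℝ) * S.N * S.m * S.P / S.delta)

/-- The logarithmic factor of the initialization bounds. -/
def lgI (S : Setting) : ℝ := Real.log ((16 : ℝ) * S.N * S.m * S.P / S.delta)

/-- Relative size of the inner product of two distinct noise patches. -/
def lam (S : Setting) : ℝ :=
  2 * Real.sqrt (Real.log ((16 : ℝ) * S.N ^ 2 * S.P ^ 2 / S.delta)) / Real.sqrt S.d

/-- Relative size of the total cross-talk coming from the unlearnable noise patches. -/
def kap (S : Setting) : ℝ := S.lam * S.SU.card * S.P * (60 * Real.sqrt S.lgT)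

/-- The consequences of Condition (H) and of the sparse regime used in the analysis. -/
structure Bounds (S : Setting) : Prop where
  two_le_P : 2 ≤ S.P
  nonempty_SU : S.SU.Nonempty
  one_le_lgT : 1 ≤ S.lgT
  one_le_lgI : 1 ≤ S.lgI
  lgI_le : S.lgI ≤ 5 * S.lgT
  lam_le : S.lam * S.N * S.P ≤ 1 / 1000
  kap_le : S.kap ≤ 1 / 1000
  early_noise : 100000 * S.lgT * S.qn ^ 3 ≤ S.N * S.alpha ^ 3
  early_max : 14745600 * S.qn ^ 3 * (S.lgI * Real.sqrt S.lgI) ≤ S.N * S.alpha ^ 3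
  late_init : 4096 * (S.m : ℝ) ^ ((1 : ℝ) / 3) * S.lgT * S.qn ^ 3 * S.sigma0 ≤ S.alpha ^ 2
  late_cross : 512 * S.kap * S.qn ^ 2 ≤ S.alpha ^ 2
  init_noise : ((S.m : ℝ) * S.P) ^ ((1 : ℝ) / 3) *
    (8 * Real.sqrt S.lgT * (S.sigma0 * S.qn)) ≤ 1 / 2
  init_signal : (S.m : ℝ) ^ ((1 : ℝ) / 3) *
    (S.alpha * (S.sigma0 * Real.sqrt (2 * S.lgI))) ≤ 1
  rate_alpha : 50 * S.eta * S.alpha ^ 2 ≤ 1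
  rate_init : 6 * S.eta * S.alpha ^ 3 * (S.sigma0 * Real.sqrt (2 * S.lgI)) ≤ 1
  eps_le : S.eps ≤ S.alpha / 2
  card_SL : (S.N : ℝ) ≤ 2 * S.SL.card

lemma qn_pos (S : Setting) : 0 < S.qn :=
  mul_pos S.hsigman (Real.sqrt_pos.2 (Nat.cast_pos.2 S.hd))

lemma qn_sq (S : Setting) : S.qn ^ 2 = S.sigman ^ 2 * S.d := by
  rw [qn, mul_pow, Real.sq_sqrt (Nat.cast_nonneg _)]

lemma lam_nonneg (S : Setting) : 0 ≤ S.lam := by unfold lam; positivity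

lemma kap_nonneg (S : Setting) : 0 ≤ S.kap := by
  have := S.lam_nonneg
  unfold kap; positivity

lemma cbrt_pow_three {a : ℝ} (ha : 0 ≤ a) : (a ^ ((1 : ℝ) / 3)) ^ 3 = a := by
  rw [← Real.rpow_natCast, ← Real.rpow_mul ha]; norm_num

lemma Bounds.sqrt_lgI_le (hB : S.Bounds) : Real.sqrt S.lgI ≤ 9 / 4 * Real.sqrt S.lgT := by
  have h1 := hB.lgI_le
  have h2 := hB.one_le_lgT
  rw [Real.sqrt_le_left (by positivity), mul_pow, Real.sq_sqrt (by linarith)]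
  nlinarith

lemma Bounds.one_le_sqrt_lgI (hB : S.Bounds) : 1 ≤ Real.sqrt S.lgI :=
  Real.one_le_sqrt.2 hB.one_le_lgI

lemma Bounds.one_le_sqrt_lgT (hB : S.Bounds) : 1 ≤ Real.sqrt S.lgT :=
  Real.one_le_sqrt.2 hB.one_le_lgT

/-! ### Consequences of the concentration event -/

lemma EventE.sqnorm_bounds (hE : S.EventE) {i : Fin S.N} {j : Fin S.P} (hj : j ≠ S.sig i) :
    S.qn ^ 2 / 2 ≤ sqnorm (S.x i j) ∧ sqnorm (S.x i j) ≤ 3 * S.qn ^ 2 / 2 := by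
  have := hE.1 i j hj
  rw [qn_sq]
  constructor <;> linarith [this.1, this.2]

lemma EventE.cross_le (hE : S.EventE) (i k : Fin S.N) (j q : Fin S.P) (hj : j ≠ S.sig i)
    (hq : q ≠ S.sig k) (hne : ((i, j) : Fin S.N × Fin S.P) ≠ (k, q)) :
    |dot (S.x i j) (S.x k q)| ≤ S.qn ^ 2 * S.lam := by
  refine (hE.2.1 i k j q hj hq hne).trans (le_of_eq ?_)
  have hd : (0 : ℝ) < S.d := Nat.cast_pos.2 S.hd
  rw [Real.sqrt_mul hd.le, qn, lam, mul_pow]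
  have := (Real.sqrt_pos.2 hd).ne'
  field_simp

lemma EventE.init_noise_le (hE : S.EventE) (r : Fin S.m) {i : Fin S.N} {j : Fin S.P}
    (hj : j ≠ S.sig i) :
    |S.y i * dot (S.w 0 r) (S.x i j)| ≤ 2 * Real.sqrt S.lgI * (S.sigma0 * S.qn) := by
  rw [abs_mul, S.abs_y, one_mul]
  refine (hE.2.2.2.2.2.1 r i j hj).trans (le_of_eq ?_)
  rw [Real.sqrt_mul (Nat.cast_nonneg _), qn, lgI]
  ring

lemma EventE.rhoHat_zero_le (hE : S.EventE) (hB : S.Bounds) :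
    S.rhoHatMax 0 ≤ 4 * Real.sqrt S.lgI * S.sigma0 / S.qn := by
  obtain ⟨r, k, -, q, hq, h⟩ := exists_rhoHatMax_eq hB.two_le_P hB.nonempty_SU 0
  have hQ := S.qn_pos
  have h0 := S.hsigma0
  rw [h, rhoHat, rho, zero_add]
  have hn := (hE.sqnorm_bounds hq).1
  have hpos : 0 < sqnorm (S.x k q) := lt_of_lt_of_le (by positivity) hn
  rw [div_le_div_iff₀ hpos hQ]
  have hd := (abs_le.1 (hE.init_noise_le r hq)).2
  calc S.y k * dot (S.w 0 r) (S.x k q) * S.qn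
      ≤ 2 * Real.sqrt S.lgI * (S.sigma0 * S.qn) * S.qn := by gcongr
    _ = 4 * Real.sqrt S.lgI * S.sigma0 * (S.qn ^ 2 / 2) := by ring
    _ ≤ _ := by gcongr

lemma EventE.sigma0_le (hE : S.EventE) (hB : S.Bounds) (t : ℕ) :
    S.sigma0 ≤ 6 * S.qn * S.rhoHatMax t := by
  obtain ⟨k, hk⟩ := hB.nonempty_SU
  obtain ⟨q, hq⟩ := exists_noise hB.two_le_P k
  obtain ⟨r, hr⟩ := hE.2.2.2.2.2.2.2 k q hq
  have hQ := S.qn_pos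
  have h0 := S.hsigma0
  have hR : S.rhoHat k q r 0 ≤ S.rhoHatMax t :=
    (rhoHat_le_rhoHatMax hk hq r 0).trans
      (rhoHatMax_mono hB.two_le_P hB.nonempty_SU (Nat.zero_le t))
  obtain ⟨hn1, hn2⟩ := hE.sqnorm_bounds hq
  have hpos : 0 < sqnorm (S.x k q) := lt_of_lt_of_le (by positivity) hn1
  have : S.sigma0 / (6 * S.qn) ≤ S.rhoHat k q r 0 := by
    rw [rhoHat, rho, zero_add, div_le_div_iff₀ (by positivity) hpos]
    calc S.sigma0 * sqnorm (S.x k q) ≤ S.sigma0 * (3 * S.qn ^ 2 / 2) := by gcongr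
      _ = S.sigma0 * S.sigman * Real.sqrt S.d / 4 * (6 * S.qn) := by rw [qn]; ring
      _ ≤ _ := by gcongr
  rw [div_le_iff₀ (by positivity)] at this
  calc S.sigma0 ≤ S.rhoHat k q r 0 * (6 * S.qn) := this
    _ ≤ S.rhoHatMax t * (6 * S.qn) := by gcongr
    _ = _ := by ring

lemma EventE.rhoHatMax_pos (hE : S.EventE) (hB : S.Bounds) (t : ℕ) : 0 < S.rhoHatMax t := by
  have h := lt_of_lt_of_le S.hsigma0 (hE.sigma0_le hB t)
  have hQ := S.qn_pos
  exact pos_of_mul_pos_right h (by positivity)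

/-! ### Noise correlations under the smallness invariant -/

/-- Smallness of the noise coefficients of learnable samples at iteration `t`. -/
def LearnableSmall (S : Setting) (t : ℕ) : Prop :=
  ∀ i ∈ S.SL, ∀ j, j ≠ S.sig i → ∀ r, S.rho i j r t ≤ S.sigma0 / S.qn + S.kap * S.rhoHatMax t

lemma card_noise_le (i : Fin S.N) : ((S.noise i).card : ℝ) ≤ S.P := by
  have := Finset.card_le_univ (S.noise i)
  rw [Fintype.card_fin] at this
  exact_mod_cast this

lemma rho_SU_le (hE : S.EventE) (hB : S.Bounds) {k : Fin S.N} (hk : k ∈ S.SU) {q : Fin S.P}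
    (hq : q ≠ S.sig k) (r : Fin S.m) (t : ℕ) :
    S.rho k q r t ≤ 60 * Real.sqrt S.lgT * S.rhoHatMax t := by
  have hQ := S.qn_pos
  have h0 := S.hsigma0
  have hR := rhoHat_le_rhoHatMax hk hq r t
  have hRpos := hE.rhoHatMax_pos hB t
  rw [rhoHat] at hR
  have hn := (hE.sqnorm_bounds hq).1
  have hpos : 0 < sqnorm (S.x k q) := lt_of_lt_of_le (by positivity) hn
  have hd := (abs_le.1 (hE.init_noise_le r hq)).1
  have hlow : -(4 * Real.sqrt S.lgI * S.sigma0 / S.qn) ≤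
      S.y k * dot (S.w 0 r) (S.x k q) / sqnorm (S.x k q) := by
    rw [← neg_div, div_le_div_iff₀ hQ hpos]
    have : 4 * Real.sqrt S.lgI * S.sigma0 * (S.qn ^ 2 / 2) ≤
        4 * Real.sqrt S.lgI * S.sigma0 * sqnorm (S.x k q) := by gcongr
    have h2 := mul_le_mul_of_nonneg_right hd hQ.le
    nlinarith
  have hs : 4 * Real.sqrt S.lgI * S.sigma0 / S.qn ≤
      24 * Real.sqrt S.lgI * S.rhoHatMax t := by
    rw [div_le_iff₀ hQ]
    have := mul_le_mul_of_nonneg_left (hE.sigma0_le hB t) (Real.sqrt_nonneg S.lgI)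
    nlinarith
  have h1 := mul_le_mul_of_nonneg_right hB.sqrt_lgI_le hRpos.le
  have h2 := mul_le_mul_of_nonneg_right hB.one_le_sqrt_lgT hRpos.le
  nlinarith

lemma rhoSum_le (hE : S.EventE) (hB : S.Bounds) {t : ℕ} (hI : S.LearnableSmall t)
    (r : Fin S.m) :
    S.rhoSum r t ≤ S.N * S.P * (S.sigma0 / S.qn + S.kap * S.rhoHatMax t) +
      S.SU.card * S.P * (60 * Real.sqrt S.lgT * S.rhoHatMax t) := by
  have hQ := S.qn_pos
  have h0 := S.hsigma0
  have hRpos := hE.rhoHatMax_pos hB t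
  have hk := S.kap_nonneg
  rw [rhoSum, S.sum_samples]
  have inner : ∀ (s : Finset (Fin S.N)) (b : ℝ), 0 ≤ b →
      (∀ i ∈ s, ∀ j, j ≠ S.sig i → S.rho i j r t ≤ b) →
      ∑ i ∈ s, ∑ j ∈ S.noise i, S.rho i j r t ≤ s.card * S.P * b := by
    intro s b hb h
    rw [mul_assoc, ← nsmul_eq_mul]
    refine Finset.sum_le_card_nsmul _ _ _ fun i hi => ?_
    refine (Finset.sum_le_card_nsmul _ _ b fun j hj => h i hi j (S.mem_noise.1 hj)).trans ?_
    rw [nsmul_eq_mul]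
    exact mul_le_mul_of_nonneg_right (card_noise_le i) hb
  refine add_le_add ((inner S.SL _ (by positivity) fun i hi j hj => hI i hi j hj r).trans ?_)
    (inner S.SU _ (by positivity) fun i hi j hj => rho_SU_le hE hB hi hj r t)
  have : (S.SL.card : ℝ) ≤ S.N := by
    have := Finset.card_le_univ S.SL
    rw [Fintype.card_fin] at this
    exact_mod_cast this
  gcongr

lemma cross_talk_le (hE : S.EventE) (hB : S.Bounds) {t : ℕ} (hI : S.LearnableSmall t)
    (r : Fin S.m) :
    S.qn ^ 2 * S.lam * S.rhoSum r t ≤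
      2 * S.kap * S.qn ^ 2 * S.rhoHatMax t + 1 / 1000 * (S.sigma0 * S.qn) := by
  have hQ := S.qn_pos
  have h0 := S.hsigma0
  have hRpos := hE.rhoHatMax_pos hB t
  have hk := S.kap_nonneg
  have hl := S.lam_nonneg
  have hlam := hB.lam_le
  calc S.qn ^ 2 * S.lam * S.rhoSum r t
      ≤ S.qn ^ 2 * S.lam * (S.N * S.P * (S.sigma0 / S.qn + S.kap * S.rhoHatMax t) +
      S.SU.card * S.P * (60 * Real.sqrt S.lgT * S.rhoHatMax t)) := by
        gcongr
        exact rhoSum_le hE hB hI r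
    _ = (S.lam * S.N * S.P) * (S.sigma0 * S.qn + S.kap * S.qn ^ 2 * S.rhoHatMax t) +
        S.kap * S.qn ^ 2 * S.rhoHatMax t := by
        rw [kap]; field_simp
    _ ≤ 1 / 1000 * (S.sigma0 * S.qn + S.kap * S.qn ^ 2 * S.rhoHatMax t) +
        S.kap * S.qn ^ 2 * S.rhoHatMax t := by gcongr
    _ ≤ _ := by
        have : 0 ≤ S.kap * S.qn ^ 2 * S.rhoHatMax t := by positivity
        linarith

lemma cross_talk_le_rhoHatMax (hE : S.EventE) (hB : S.Bounds) {t : ℕ}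
    (hI : S.LearnableSmall t) (r : Fin S.m) :
    S.qn ^ 2 * S.lam * S.rhoSum r t ≤ 1 / 20 * (S.qn ^ 2 * S.rhoHatMax t) := by
  have hQ := S.qn_pos
  have hRpos := hE.rhoHatMax_pos hB t
  have h1 := mul_le_mul_of_nonneg_right (hE.sigma0_le hB t) hQ.le
  have h2 : S.kap * (S.qn ^ 2 * S.rhoHatMax t) ≤ 1 / 1000 * (S.qn ^ 2 * S.rhoHatMax t) :=
    mul_le_mul_of_nonneg_right hB.kap_le (by positivity)
  have h3 : 0 ≤ S.qn ^ 2 * S.rhoHatMax t := by positivity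
  have := cross_talk_le hE hB hI r
  nlinarith

/-- Noise correlations of learnable samples. -/
lemma abs_dot_noise_SL_le (hD : S.ATDyn) (hE : S.EventE) (hB : S.Bounds) {t : ℕ}
    (hI : S.LearnableSmall t) {i : Fin S.N} (hi : i ∈ S.SL) {j : Fin S.P} (hj : j ≠ S.sig i)
    (r : Fin S.m) :
    |S.y i * dot (S.w t r) (S.x i j)| ≤ 8 * Real.sqrt S.lgT * (S.sigma0 * S.qn) +
      4 * S.kap * S.qn ^ 2 * S.rhoHatMax t := by
  have hQ := S.qn_pos
  have h0 := S.hsigma0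
  have hRpos := hE.rhoHatMax_pos hB t
  have hk := S.kap_nonneg
  have hl := S.lam_nonneg
  have h1 := hD.abs_dot_noise_sub_le (X := S.qn ^ 2 * S.lam) (by positivity)
    hE.cross_le t r i hj
  have h2 := cross_talk_le hE hB hI r
  have h3 := hE.init_noise_le r hj
  have hρ := rho_nonneg (S := S) i j r t
  obtain ⟨hn1, hn2⟩ := hE.sqnorm_bounds hj
  have h4 : S.rho i j r t * sqnorm (S.x i j) ≤
      (S.sigma0 / S.qn + S.kap * S.rhoHatMax t) * (3 * S.qn ^ 2 / 2) :=
    mul_le_mul (hI i hi j hj r) hn2 (le_trans (by positivity) hn1) (by positivity)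
  have h5 : (S.sigma0 / S.qn + S.kap * S.rhoHatMax t) * (3 * S.qn ^ 2 / 2) =
      3 / 2 * (S.sigma0 * S.qn) + 3 / 2 * (S.kap * S.qn ^ 2 * S.rhoHatMax t) := by
    field_simp
  have h6 : 0 ≤ S.rho i j r t * sqnorm (S.x i j) :=
    mul_nonneg hρ (le_trans (by positivity) hn1)
  have hs : 0 ≤ S.sigma0 * S.qn := by positivity
  have h7 := mul_le_mul_of_nonneg_right hB.sqrt_lgI_le hs
  have h8 := mul_le_mul_of_nonneg_right hB.one_le_sqrt_lgT hs
  have h9 : 0 ≤ S.kap * S.qn ^ 2 * S.rhoHatMax t := by positivity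
  rw [abs_le] at h1 h3 ⊢
  constructor <;> nlinarith [h1.1, h1.2, h3.1, h3.2]

/-- Noise correlations of unlearnable samples. -/
lemma dot_noise_SU_bounds (hD : S.ATDyn) (hE : S.EventE) (hB : S.Bounds) {t : ℕ}
    (hI : S.LearnableSmall t) {k : Fin S.N} (hk : k ∈ S.SU) {q : Fin S.P} (hq : q ≠ S.sig k)
    (r : Fin S.m) :
    S.y k * dot (S.w t r) (S.x k q) ≤ 31 / 20 * (S.qn ^ 2 * S.rhoHatMax t) ∧
    -(40 * Real.sqrt S.lgI * (S.qn ^ 2 * S.rhoHatMax t)) ≤ S.y k * dot (S.w t r) (S.x k q) ∧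
    (S.rhoHat k q r t = S.rhoHatMax t →
      9 / 20 * (S.qn ^ 2 * S.rhoHatMax t) ≤ S.y k * dot (S.w t r) (S.x k q)) := by
  have hQ := S.qn_pos
  have h0 := S.hsigma0
  have hRpos := hE.rhoHatMax_pos hB t
  have hl := S.lam_nonneg
  have h1 := abs_le.1 (hD.abs_dot_noise_sub_le (X := S.qn ^ 2 * S.lam) (by positivity)
    hE.cross_le t r k hq)
  have h2 := cross_talk_le_rhoHatMax hE hB hI r
  have h3 := abs_le.1 (hE.init_noise_le r hq)
  have hρ := rho_nonneg (S := S) k q r t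
  obtain ⟨hn1, hn2⟩ := hE.sqnorm_bounds hq
  have hpos : 0 < sqnorm (S.x k q) := lt_of_lt_of_le (by positivity) hn1
  have heq : S.y k * dot (S.w 0 r) (S.x k q) + S.rho k q r t * sqnorm (S.x k q) =
      S.rhoHat k q r t * sqnorm (S.x k q) := by
    rw [rhoHat]; field_simp; ring
  have hQR : 0 < S.qn ^ 2 * S.rhoHatMax t := by positivity
  refine ⟨?_, ?_, ?_⟩
  · have hR := rhoHat_le_rhoHatMax hk hq r t
    have h4 : S.rhoHat k q r t * sqnorm (S.x k q) ≤ S.rhoHatMax t * (3 * S.qn ^ 2 / 2) := by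
      calc _ ≤ S.rhoHatMax t * sqnorm (S.x k q) := by gcongr
        _ ≤ _ := by gcongr
    rw [heq] at h1
    linarith [h1.2]
  · have h4 : 0 ≤ S.rho k q r t * sqnorm (S.x k q) := by positivity
    have h5 := mul_le_mul_of_nonneg_right (hE.sigma0_le hB t) hQ.le
    have h6 := mul_le_mul_of_nonneg_left h5 (Real.sqrt_nonneg S.lgI)
    have h7 := mul_le_mul_of_nonneg_right hB.one_le_sqrt_lgI hQR.le
    nlinarith [h1.1, h3.1]
  · intro hR
    have h4 : S.rhoHatMax t * (S.qn ^ 2 / 2) ≤ S.rhoHatMax t * sqnorm (S.x k q) := by gcongr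
    rw [heq, hR] at h1
    linarith [h1.1]

/-! ### One-step bounds under the smallness invariant -/

lemma cube_le_of_cbrt_mul_le {a z c : ℝ} (ha : 0 ≤ a) (hz : a ^ ((1 : ℝ) / 3) * z ≤ c) :
    a * z ^ 3 ≤ c ^ 3 := by
  calc a * z ^ 3 = (a ^ ((1 : ℝ) / 3) * z) ^ 3 := by rw [mul_pow, cbrt_pow_three ha]
    _ ≤ c ^ 3 := Odd.strictMono_pow (by decide) |>.monotone hz

lemma sum_noise_cube_le {t : ℕ} (i : Fin S.N) {b : ℝ} (hb : 0 ≤ b)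
    (h : ∀ r, ∀ j, j ≠ S.sig i → S.y i * dot (S.w t r) (S.x i j) ≤ b) :
    ∑ r, ∑ j ∈ S.noise i, (S.y i * dot (S.w t r) (S.x i j)) ^ 3 ≤ S.m * S.P * b ^ 3 := by
  have key : ∀ r, ∑ j ∈ S.noise i, (S.y i * dot (S.w t r) (S.x i j)) ^ 3 ≤ S.P * b ^ 3 := by
    intro r
    refine (Finset.sum_le_card_nsmul _ _ (b ^ 3) fun j hj => ?_).trans ?_
    · exact (Odd.strictMono_pow (by decide)).monotone (h r j (S.mem_noise.1 hj))
    · rw [nsmul_eq_mul]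
      exact mul_le_mul_of_nonneg_right (card_noise_le i) (by positivity)
  refine (Finset.sum_le_card_nsmul _ _ _ fun r _ => key r).trans (le_of_eq ?_)
  rw [Finset.card_univ, Fintype.card_fin, nsmul_eq_mul, mul_assoc]

lemma neg_le_sum_noise_cube {t : ℕ} (i : Fin S.N) {b : ℝ} (hb : 0 ≤ b)
    (h : ∀ r, ∀ j, j ≠ S.sig i → -b ≤ S.y i * dot (S.w t r) (S.x i j)) :
    -(S.m * S.P * b ^ 3) ≤ ∑ r, ∑ j ∈ S.noise i, (S.y i * dot (S.w t r) (S.x i j)) ^ 3 := by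
  have key : ∀ r, -(S.P * b ^ 3) ≤
      ∑ j ∈ S.noise i, (S.y i * dot (S.w t r) (S.x i j)) ^ 3 := by
    intro r
    refine le_trans ?_ (Finset.card_nsmul_le_sum _ _ (-b ^ 3) fun j hj => ?_)
    · rw [nsmul_eq_mul]
      have := mul_le_mul_of_nonneg_right (card_noise_le i) (pow_nonneg hb 3)
      linarith
    · rw [← Odd.neg_pow (by decide)]
      exact (Odd.strictMono_pow (by decide)).monotone (h r j (S.mem_noise.1 hj))
  refine le_trans (le_of_eq ?_) (Finset.card_nsmul_le_sum _ _ _ fun r _ => key r)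
  rw [Finset.card_univ, Fintype.card_fin, nsmul_eq_mul]
  ring

/-- The maximum shifted coefficient is below the memorization threshold. -/
def BelowThreshold (S : Setting) (t : ℕ) : Prop :=
  ((S.m : ℝ) * S.P) ^ ((1 : ℝ) / 3) * (S.qn ^ 2 * S.rhoHatMax t) ≤ 1

lemma marg_SU_le (hD : S.ATDyn) (hE : S.EventE) (hB : S.Bounds) {t : ℕ}
    (hI : S.LearnableSmall t) (hT : S.BelowThreshold t) {k : Fin S.N} (hk : k ∈ S.SU) :
    S.marg t k ≤ 4 := by
  have hRpos := hE.rhoHatMax_pos hB t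
  have hQ := S.qn_pos
  rw [S.marg_SU t hk]
  refine (sum_noise_cube_le k (b := 31 / 20 * (S.qn ^ 2 * S.rhoHatMax t)) (by positivity)
    fun r j hj => (dot_noise_SU_bounds hD hE hB hI hk hj r).1).trans ?_
  have := cube_le_of_cbrt_mul_le (a := (S.m : ℝ) * S.P) (by positivity) hT
  rw [mul_pow]
  nlinarith

lemma rhoHat_succ (k : Fin S.N) (q : Fin S.P) (r : Fin S.m) (t : ℕ) :
    S.rhoHat k q r (t + 1) = S.rhoHat k q r t +
      3 * S.eta / S.N * psi (S.marg t k) * (S.y k * dot (S.w t r) (S.x k q)) ^ 2 := by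
  rw [rhoHat, rhoHat, rho, mul_pow, y_sq]
  ring

lemma rhoHatMax_succ_lower (hD : S.ATDyn) (hE : S.EventE) (hB : S.Bounds) {t : ℕ}
    (hI : S.LearnableSmall t) (hT : S.BelowThreshold t) :
    S.rhoHatMax t + S.eta * S.sigman ^ 4 * (S.d : ℝ) ^ 2 /
      (3 * S.N * (1 + Real.exp 4)) * (S.rhoHatMax t) ^ 2 ≤ S.rhoHatMax (t + 1) := by
  obtain ⟨r, k, hk, q, hq, h⟩ := exists_rhoHatMax_eq hB.two_le_P hB.nonempty_SU t
  have hRpos := hE.rhoHatMax_pos hB t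
  have hQ := S.qn_pos
  have hN : (0 : ℝ) < S.N := Nat.cast_pos.2 S.hN
  have hη := S.heta
  refine le_trans ?_ (rhoHat_le_rhoHatMax hk hq r (t + 1))
  rw [rhoHat_succ, ← h]
  have h1 := (dot_noise_SU_bounds hD hE hB hI hk hq r).2.2 h.symm
  have h2 := one_div_le_psi (marg_SU_le hD hE hB hI hT hk)
  have hq4 : S.sigman ^ 4 * (S.d : ℝ) ^ 2 = S.qn ^ 4 := by
    rw [show S.qn ^ 4 = (S.qn ^ 2) ^ 2 by ring, qn_sq]; ring
  refine add_le_add le_rfl ?_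
  calc S.eta * S.sigman ^ 4 * (S.d : ℝ) ^ 2 / (3 * S.N * (1 + Real.exp 4)) * S.rhoHatMax t ^ 2
      = 3 * S.eta / S.N * (1 / (1 + Real.exp 4)) *
        (1 / 9 * (S.qn ^ 2 * S.rhoHatMax t) ^ 2) := by
        rw [mul_assoc S.eta, hq4]; field_simp; norm_num
    _ ≤ 3 * S.eta / S.N * (1 / (1 + Real.exp 4)) *
        (9 / 20 * (S.qn ^ 2 * S.rhoHatMax t)) ^ 2 := by
        gcongr
        nlinarith [sq_nonneg (S.qn ^ 2 * S.rhoHatMax t)]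
    _ ≤ _ := by
        have := psi_nonneg (S.marg t k)
        gcongr

lemma rhoHatMax_succ_upper (hD : S.ATDyn) (hE : S.EventE) (hB : S.Bounds) {t : ℕ}
    (hI : S.LearnableSmall t) :
    S.rhoHatMax (t + 1) ≤ S.rhoHatMax t +
      4800 * S.eta * S.sigman ^ 4 * (S.d : ℝ) ^ 2 * S.lgI / S.N * (S.rhoHatMax t) ^ 2 := by
  obtain ⟨r, k, hk, q, hq, h⟩ := exists_rhoHatMax_eq hB.two_le_P hB.nonempty_SU (t + 1)
  have hRpos := hE.rhoHatMax_pos hB t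
  have hQ := S.qn_pos
  have hN : (0 : ℝ) < S.N := Nat.cast_pos.2 S.hN
  have hη := S.heta
  have hL : 0 ≤ S.lgI := zero_le_one.trans hB.one_le_lgI
  obtain ⟨h1, h2, -⟩ := dot_noise_SU_bounds hD hE hB hI hk hq r
  rw [h, rhoHat_succ]
  have habs : |S.y k * dot (S.w t r) (S.x k q)| ≤
      40 * Real.sqrt S.lgI * (S.qn ^ 2 * S.rhoHatMax t) := by
    rw [abs_le]
    refine ⟨h2, h1.trans ?_⟩
    have := hB.one_le_sqrt_lgI
    gcongr
    linarith
  have hsq : (S.y k * dot (S.w t r) (S.x k q)) ^ 2 ≤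
      1600 * S.lgI * (S.qn ^ 2 * S.rhoHatMax t) ^ 2 := by
    rw [← sq_abs]
    calc _ ≤ (40 * Real.sqrt S.lgI * (S.qn ^ 2 * S.rhoHatMax t)) ^ 2 := by gcongr
      _ = _ := by rw [mul_pow, mul_pow, Real.sq_sqrt hL]; norm_num
  have hq4 : S.sigman ^ 4 * (S.d : ℝ) ^ 2 = S.qn ^ 4 := by
    rw [show S.qn ^ 4 = (S.qn ^ 2) ^ 2 by ring, qn_sq]; ring
  refine add_le_add (rhoHat_le_rhoHatMax hk hq r t) ?_
  calc 3 * S.eta / S.N * psi (S.marg t k) * (S.y k * dot (S.w t r) (S.x k q)) ^ 2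
      ≤ 3 * S.eta / S.N * 1 * (1600 * S.lgI * (S.qn ^ 2 * S.rhoHatMax t) ^ 2) := by
        gcongr
        exact psi_le_one _
    _ = _ := by
        rw [show 4800 * S.eta * S.sigman ^ 4 * (S.d : ℝ) ^ 2 =
          4800 * S.eta * (S.sigman ^ 4 * (S.d : ℝ) ^ 2) by ring, hq4]
        field_simp; ring

end Setting

/-! ### Quadratic growth sequences -/

section QuadraticGrowth

variable {w g : ℕ → ℝ}

lemma half_rate_le_inv_sub_inv {a b c : ℝ} (ha : 0 < a) (hc : 0 ≤ c) (hca : c * a ≤ 1)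
    (hb : b = a + c * a ^ 2) : c ≤ 2 / a - 2 / b := by
  have hb' : b = a * (1 + c * a) := by rw [hb]; ring
  have h1 : 0 < 1 + c * a := by positivity
  have : 2 / a - 2 / b = 2 * c / (1 + c * a) := by
    rw [hb']; field_simp; ring
  rw [this, le_div_iff₀ h1]
  nlinarith

lemma quadratic_growth_pos (h0 : 0 < w 0) (hstep : ∀ s, w (s + 1) = w s + g s * w s ^ 2)
    (hg : ∀ s, 0 ≤ g s) (s : ℕ) : 0 < w s := by
  induction s with
  | zero => exact h0
  | succ s ih => rw [hstep]; have := hg s; positivity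

lemma quadratic_growth_mono (hstep : ∀ s, w (s + 1) = w s + g s * w s ^ 2)
    (hg : ∀ s, 0 ≤ g s) : Monotone w := by
  refine monotone_nat_of_le_succ fun s => ?_
  rw [hstep]
  have := mul_nonneg (hg s) (sq_nonneg (w s))
  linarith

lemma sum_rate_above_le (h0 : 0 < w 0) (hstep : ∀ s, w (s + 1) = w s + g s * w s ^ 2)
    (hg : ∀ s, 0 ≤ g s) {t : ℕ} (hratio : ∀ s < t, g s * w s ≤ 1) {θ : ℝ} (hθ : 0 < θ) :
    ∑ s ∈ (Finset.range t).filter (fun s => θ < w s), g s ≤ 2 / θ := by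
  have hpos := quadratic_growth_pos h0 hstep hg
  have hmono := quadratic_growth_mono hstep hg
  have key : ∑ s ∈ (Finset.range t).filter (fun s => θ < w s), g s ≤
      2 / θ - 2 / max θ (w t) := by
    induction t with
    | zero =>
      have : 2 / max θ (w 0) ≤ 2 / θ := by gcongr; exact le_max_left _ _
      simpa using this
    | succ t ih =>
      have ih := ih fun s hs => hratio s (hs.trans t.lt_succ_self)
      rw [Finset.sum_filter] at ih ⊢
      rw [Finset.sum_range_succ]
      have hle : w t ≤ w (t + 1) := hmono t.le_succ
      split_ifs with hlate
      · rw [max_eq_right hlate.le] at ih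
        rw [max_eq_right (hlate.le.trans hle)]
        have := half_rate_le_inv_sub_inv (hpos t) (hg t) (hratio t t.lt_succ_self) (hstep t)
        linarith
      · have : 2 / max θ (w (t + 1)) ≤ 2 / max θ (w t) := by
          have : 0 < max θ (w t) := lt_max_of_lt_left hθ
          gcongr
        linarith
  have : 0 ≤ 2 / max θ (w t) := by
    have : 0 < max θ (w t) := lt_max_of_lt_left hθ
    positivity
  linarith

lemma card_below_mul_le (h0 : 0 < w 0) (hstep : ∀ s, w (s + 1) = w s + g s * w s ^ 2)
    (hg : ∀ s, 0 ≤ g s) {t : ℕ} (hratio : ∀ s < t, g s * w s ≤ 1) {θ c : ℝ}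
    (hc : ∀ s < t, ¬ θ < w s → c ≤ g s) :
    ((Finset.range t).filter (fun s => ¬ θ < w s)).card * c ≤ 2 / w 0 := by
  have hpos := quadratic_growth_pos h0 hstep hg
  have key : ∑ s ∈ (Finset.range t).filter (fun s => ¬ θ < w s), c ≤ 2 / w 0 - 2 / w t := by
    induction t with
    | zero => simp
    | succ t ih =>
      have ih := ih (fun s hs => hratio s (hs.trans t.lt_succ_self))
        (fun s hs => hc s (hs.trans t.lt_succ_self))
      rw [Finset.sum_filter] at ih ⊢
      rw [Finset.sum_range_succ]
      have h1 := half_rate_le_inv_sub_inv (hpos t) (hg t) (hratio t t.lt_succ_self) (hstep t)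
      have h2 := hg t
      split_ifs with hearly
      · linarith
      · have := hc t t.lt_succ_self hearly
        linarith
  rw [Finset.sum_const, nsmul_eq_mul] at key
  have : 0 ≤ 2 / w t := by have := hpos t; positivity
  linarith

lemma quadratic_growth_le_two_mul {R : ℕ → ℝ} {β : ℝ} (hβ : 0 ≤ β) (hR : ∀ s, 0 ≤ R s) {n : ℕ}
    (hstep : ∀ s < n, R (s + 1) ≤ R s + β * R s ^ 2) (hn : n * (4 * β * R 0) ≤ 1) :
    R n ≤ 2 * R 0 := by
  have h0 := hR 0
  have hle : ∀ k : ℕ, k ≤ n → k * (4 * β * R 0) ≤ 1 := fun k hk => by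
    refine le_trans ?_ hn
    have : (k : ℝ) ≤ n := Nat.cast_le.2 hk
    gcongr
  have key : ∀ k : ℕ, k ≤ n → R k ≤ R 0 + k * (4 * β * R 0) * R 0 := by
    intro k
    induction k with
    | zero => intro _; simp
    | succ k ih =>
      intro hk
      have h1 := ih (Nat.le_of_succ_le hk)
      have h2 := mul_le_mul_of_nonneg_right (hle k (Nat.le_of_succ_le hk)) h0
      have h3 : R k ≤ 2 * R 0 := by linarith
      have h4 : β * R k ^ 2 ≤ β * (2 * R 0) ^ 2 := by
        have := hR k
        gcongr
      have h5 := hstep k hk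
      push_cast
      nlinarith
  have h1 := key n le_rfl
  have h2 := mul_le_mul_of_nonneg_right hn h0
  linarith

end QuadraticGrowth

namespace Setting

variable {S : Setting}

/-! ### Signal learning -/

lemma Bounds.asig_bounds (hB : S.Bounds) (t : ℕ) {i : Fin S.N} (hi : i ∈ S.SL) :
    S.alpha / 2 ≤ S.asig t i ∧ S.asig t i ≤ S.alpha := by
  have h := S.hadvlearn t i hi
  have := hB.eps_le
  exact ⟨le_trans (by linarith) h.1, h.2⟩

lemma card_SL_le (S : Setting) : (S.SL.card : ℝ) ≤ S.N := by
  have := Finset.card_le_univ S.SL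
  rw [Fintype.card_fin] at this
  exact_mod_cast this

lemma Bounds.asig_nonneg (hB : S.Bounds) (t : ℕ) {i : Fin S.N} (hi : i ∈ S.SL) :
    0 ≤ S.asig t i :=
  le_trans (half_pos S.halpha).le (hB.asig_bounds t hi).1

lemma Bounds.gsig_nonneg (hB : S.Bounds) (t : ℕ) : 0 ≤ S.gsig t :=
  mul_nonneg S.rate_nonneg <| Finset.sum_nonneg fun _ hi =>
    mul_nonneg (psi_nonneg _) (pow_nonneg (hB.asig_nonneg t hi) 3)

lemma Bounds.gsig_le (hB : S.Bounds) (t : ℕ) {b : ℝ} (hb : 0 ≤ b)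
    (h : ∀ i ∈ S.SL, psi (S.marg t i) ≤ b) : S.gsig t ≤ 3 * S.eta * S.alpha ^ 3 * b := by
  have hα := S.halpha
  have hη := S.heta
  have hN : (0 : ℝ) < S.N := Nat.cast_pos.2 S.hN
  have h1 : ∑ i ∈ S.SL, psi (S.marg t i) * S.asig t i ^ 3 ≤ S.N * (b * S.alpha ^ 3) := by
    refine (Finset.sum_le_card_nsmul _ _ (b * S.alpha ^ 3) fun i hi => ?_).trans ?_
    · have := hB.asig_nonneg t hi
      have := (hB.asig_bounds t hi).2
      have := h i hi
      gcongr
    · rw [nsmul_eq_mul]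
      have := S.card_SL_le
      gcongr
  calc S.gsig t ≤ 3 * S.eta / S.N * (S.N * (b * S.alpha ^ 3)) := by
        rw [gsig]; gcongr
    _ = _ := by field_simp

lemma Bounds.le_gsig (hB : S.Bounds) (t : ℕ) {b : ℝ} (hb : 0 ≤ b)
    (h : ∀ i ∈ S.SL, b ≤ psi (S.marg t i)) : 3 / 16 * S.eta * S.alpha ^ 3 * b ≤ S.gsig t := by
  have hα := S.halpha
  have hη := S.heta
  have hN : (0 : ℝ) < S.N := Nat.cast_pos.2 S.hN
  have h1 : S.N / 2 * (b * (S.alpha / 2) ^ 3) ≤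
      ∑ i ∈ S.SL, psi (S.marg t i) * S.asig t i ^ 3 := by
    refine le_trans ?_ (Finset.card_nsmul_le_sum _ _ (b * (S.alpha / 2) ^ 3) fun i hi => ?_)
    · rw [nsmul_eq_mul]
      have := hB.card_SL
      gcongr
      linarith
    · have := (hB.asig_bounds t hi).1
      have := h i hi
      have := psi_nonneg (S.marg t i)
      gcongr
  calc _ = 3 * S.eta / S.N * (S.N / 2 * (b * (S.alpha / 2) ^ 3)) := by field_simp; ring
    _ ≤ S.gsig t := by rw [gsig]; gcongr

lemma Bounds.rate_psi_le (hB : S.Bounds) (t : ℕ) {i : Fin S.N} (hi : i ∈ S.SL) :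
    3 * S.eta / S.N * psi (S.marg t i) ≤ 8 / S.alpha ^ 3 * S.gsig t := by
  have hα := S.halpha
  have hr := S.rate_nonneg
  have h1 : psi (S.marg t i) * S.asig t i ^ 3 ≤
      ∑ i ∈ S.SL, psi (S.marg t i) * S.asig t i ^ 3 :=
    Finset.single_le_sum (f := fun i => psi (S.marg t i) * S.asig t i ^ 3)
      (fun i hi => mul_nonneg (psi_nonneg _) (pow_nonneg (hB.asig_nonneg t hi) 3)) hi
  have h2 : psi (S.marg t i) * (S.alpha / 2) ^ 3 ≤ psi (S.marg t i) * S.asig t i ^ 3 := by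
    have := (hB.asig_bounds t hi).1
    have := psi_nonneg (S.marg t i)
    gcongr
  calc 3 * S.eta / S.N * psi (S.marg t i)
      = 8 / S.alpha ^ 3 * (3 * S.eta / S.N * (psi (S.marg t i) * (S.alpha / 2) ^ 3)) := by
        field_simp; norm_num
    _ ≤ 8 / S.alpha ^ 3 * S.gsig t := by
        rw [gsig]
        gcongr
        exact h2.trans h1

/-- Neuron `r₀` has the largest signal coordinate, and no coordinate is very negative. -/
def Leading (S : Setting) (r₀ : Fin S.m) (t : ℕ) : Prop :=
  ∀ r, -(S.sigma0 * Real.sqrt (2 * S.lgI)) ≤ S.wsig t r ∧ S.wsig t r ≤ S.wsig t r₀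

lemma log_init_signal_le (S : Setting) :
    Real.log ((16 : ℝ) * S.m / S.delta) ≤ S.lgI := by
  have hδ := S.hdelta0
  have hm : (1 : ℝ) ≤ S.m := Nat.one_le_cast.2 S.hm
  have hN : (1 : ℝ) ≤ S.N := Nat.one_le_cast.2 S.hN
  have hP : (1 : ℝ) ≤ S.P := Nat.one_le_cast.2 S.hP
  unfold lgI
  refine Real.log_le_log (by positivity) (div_le_div_of_nonneg_right ?_ hδ.le)
  calc (16 : ℝ) * S.m = 16 * 1 * S.m * 1 := by ring
    _ ≤ 16 * S.N * S.m * S.P := by gcongr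

lemma exists_leading (hD : S.ATDyn) (hE : S.EventE) (hB : S.Bounds) :
    ∃ r₀, S.sigma0 / 2 ≤ S.wsig 0 r₀ ∧ ∀ t, S.Leading r₀ t := by
  have : Nonempty (Fin S.m) := ⟨⟨0, S.hm⟩⟩
  obtain ⟨r₀, hr₀⟩ := Finite.exists_max (S.wsig 0)
  obtain ⟨r₁, hr₁⟩ := hE.2.2.2.2.2.2.1
  rw [dot_e1] at hr₁
  have h0 : S.sigma0 / 2 ≤ S.wsig 0 r₀ := hr₁.trans (hr₀ r₁)
  have hσ := S.hsigma0
  have hα := S.halpha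
  have hη := S.heta
  have hpos := quadratic_growth_pos (w := fun t => S.wsig t r₀) (lt_of_lt_of_le (by positivity) h0)
    (fun t => hD.wsig_succ t r₀) hB.gsig_nonneg
  refine ⟨r₀, h0, fun t => ?_⟩
  induction t with
  | zero =>
    refine fun r => ⟨?_, hr₀ r⟩
    have h := hE.2.2.2.2.1 r
    rw [dot_e1] at h
    refine (neg_le_neg ?_).trans (abs_le.1 h).1
    have := S.log_init_signal_le
    gcongr
  | succ t ih =>
    intro r
    obtain ⟨h1, h2⟩ := ih r
    have hg := hB.gsig_nonneg t
    have hg2 := hB.gsig_le t zero_le_one fun i _ => psi_le_one _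
    rw [hD.wsig_succ, hD.wsig_succ]
    refine ⟨h1.trans ?_, ?_⟩
    · have := mul_nonneg hg (sq_nonneg (S.wsig t r))
      linarith
    · have hw : 0 < S.wsig t r₀ := hpos t
      have h3 : S.gsig t * (S.sigma0 * Real.sqrt (2 * S.lgI)) ≤ 1 := by
        have := hB.rate_init
        have h4 : 0 ≤ S.sigma0 * Real.sqrt (2 * S.lgI) := by positivity
        have := mul_le_mul_of_nonneg_right hg2 h4
        have : 0 ≤ S.eta * S.alpha ^ 3 * (S.sigma0 * Real.sqrt (2 * S.lgI)) := by positivity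
        nlinarith
      have h5 : 0 ≤ 1 + S.gsig t * (S.wsig t r₀ + S.wsig t r) := by
        have := mul_le_mul_of_nonneg_left h1 hg
        have := mul_nonneg hg hw.le
        nlinarith
      nlinarith [mul_nonneg (sub_nonneg.2 h2) h5]

/-- The noise part of the margins of learnable samples is bounded. -/
lemma abs_noise_margin_le (hD : S.ATDyn) (hE : S.EventE) (hB : S.Bounds) {t : ℕ}
    (hI : S.LearnableSmall t) (hT : S.BelowThreshold t) {i : Fin S.N} (hi : i ∈ S.SL) :
    -1 ≤ ∑ r, ∑ j ∈ S.noise i, (S.y i * dot (S.w t r) (S.x i j)) ^ 3 ∧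
    ∑ r, ∑ j ∈ S.noise i, (S.y i * dot (S.w t r) (S.x i j)) ^ 3 ≤ 1 := by
  have hQ := S.qn_pos
  have h0 := S.hsigma0
  have hRpos := hE.rhoHatMax_pos hB t
  have hk := S.kap_nonneg
  set b := 8 * Real.sqrt S.lgT * (S.sigma0 * S.qn) + 4 * S.kap * S.qn ^ 2 * S.rhoHatMax t with hb
  have hb0 : 0 ≤ b := by positivity
  have hdot := fun r j (hj : j ≠ S.sig i) => abs_le.1 (abs_dot_noise_SL_le hD hE hB hI hi hj r)
  have hbb : S.m * S.P * b ^ 3 ≤ 1 ^ 3 := by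
    refine cube_le_of_cbrt_mul_le (by positivity) ?_
    have h1 := hB.init_noise
    have h2 : S.kap * (((S.m : ℝ) * S.P) ^ ((1 : ℝ) / 3) * (S.qn ^ 2 * S.rhoHatMax t)) ≤
        1 / 1000 * 1 := mul_le_mul hB.kap_le hT (by positivity) (by norm_num)
    rw [hb]
    nlinarith
  have h1 := sum_noise_cube_le i hb0 fun r j hj => (hdot r j hj).2
  have h2 := neg_le_sum_noise_cube i hb0 fun r j hj => (hdot r j hj).1
  constructor <;> linarith

lemma marg_SL_bounds (hD : S.ATDyn) (hE : S.EventE) (hB : S.Bounds) {t : ℕ}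
    (hI : S.LearnableSmall t) (hT : S.BelowThreshold t) {r₀ : Fin S.m} (hlead : S.Leading r₀ t)
    (hw : 0 < S.wsig t r₀) {i : Fin S.N} (hi : i ∈ S.SL) :
    (S.alpha * S.wsig t r₀) ^ 3 / 8 - 2 ≤ S.marg t i ∧
    S.marg t i ≤ S.m * (S.alpha * S.wsig t r₀) ^ 3 + 1 := by
  obtain ⟨hn1, hn2⟩ := abs_noise_margin_le hD hE hB hI hT hi
  obtain ⟨ha1, ha2⟩ := hB.asig_bounds t hi
  have ha0 := hB.asig_nonneg t hi
  have hα := S.halpha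
  have hσ := S.hsigma0
  rw [S.marg_SL t hi, Finset.sum_add_distrib]
  constructor
  · set M := S.alpha * (S.sigma0 * Real.sqrt (2 * S.lgI)) with hM
    have hM3 : S.m * M ^ 3 ≤ 1 ^ 3 :=
      cube_le_of_cbrt_mul_le (Nat.cast_nonneg _) hB.init_signal
    have hlow : ∀ r, -M ≤ S.asig t i * S.wsig t r := by
      intro r
      have h1 := mul_le_mul_of_nonneg_left (hlead r).1 ha0
      have h2 : S.asig t i * (S.sigma0 * Real.sqrt (2 * S.lgI)) ≤ M := by
        rw [hM]; gcongr
      linarith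
    have hterm : ∀ r, 0 ≤ (S.asig t i * S.wsig t r) ^ 3 + M ^ 3 := by
      intro r
      have := (Odd.strictMono_pow (R := ℝ) (n := 3) (by decide)).monotone (hlow r)
      simp only [Odd.neg_pow (show Odd 3 by decide)] at this
      linarith
    have hsingle : (S.asig t i * S.wsig t r₀) ^ 3 + M ^ 3 ≤
        ∑ r, ((S.asig t i * S.wsig t r) ^ 3 + M ^ 3) :=
      Finset.single_le_sum (f := fun r => (S.asig t i * S.wsig t r) ^ 3 + M ^ 3)
        (fun r _ => hterm r) (Finset.mem_univ r₀)
    rw [Finset.sum_add_distrib, Finset.sum_const, Finset.card_univ, Fintype.card_fin,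
      nsmul_eq_mul] at hsingle
    have hM0 : 0 ≤ M ^ 3 := by positivity
    have h8 : (S.alpha / 2 * S.wsig t r₀) ^ 3 ≤ (S.asig t i * S.wsig t r₀) ^ 3 := by gcongr
    have h9 : (S.alpha / 2 * S.wsig t r₀) ^ 3 = (S.alpha * S.wsig t r₀) ^ 3 / 8 := by ring
    linarith
  · have hup : ∀ r, (S.asig t i * S.wsig t r) ^ 3 ≤ (S.alpha * S.wsig t r₀) ^ 3 := by
      intro r
      refine (Odd.strictMono_pow (R := ℝ) (n := 3) (by decide)).monotone ?_
      calc S.asig t i * S.wsig t r ≤ S.asig t i * S.wsig t r₀ := by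
            gcongr; exact (hlead r).2
        _ ≤ _ := by gcongr
    have := Finset.sum_le_card_nsmul Finset.univ _ _ fun r _ => hup r
    rw [Finset.card_univ, Fintype.card_fin, nsmul_eq_mul] at this
    linarith

lemma exp_two_lt : Real.exp 2 < 15 / 2 := by
  have h := Real.exp_one_lt_d9
  have : Real.exp 2 = Real.exp 1 ^ 2 := by rw [← Real.exp_nat_mul]; norm_num
  rw [this]
  nlinarith [Real.exp_pos 1]

lemma mul_exp_neg_cube_le {z : ℝ} (hz : 0 ≤ z) : z * Real.exp (-(z ^ 3 / 8)) ≤ 2 := by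
  have h1 := Real.add_one_le_exp (z ^ 3 / 8)
  rw [Real.exp_neg, ← div_eq_mul_inv, div_le_iff₀ (Real.exp_pos _)]
  have h2 : z ≤ 2 + z ^ 3 / 4 := by
    rcases le_total z 2 with h | h
    · have : 0 ≤ z ^ 3 := by positivity
      linarith
    · nlinarith [mul_nonneg hz (sub_nonneg.2 h)]
  linarith

lemma gsig_mul_le_one (hD : S.ATDyn) (hE : S.EventE) (hB : S.Bounds) {t : ℕ}
    (hI : S.LearnableSmall t) (hT : S.BelowThreshold t) {r₀ : Fin S.m} (hlead : S.Leading r₀ t)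
    (hw : 0 < S.wsig t r₀) : S.gsig t * S.wsig t r₀ ≤ 1 := by
  have hα := S.halpha
  have hη := S.heta
  set z := S.alpha * S.wsig t r₀ with hz
  have hz0 : 0 ≤ z := by positivity
  have hg := hB.gsig_le t (b := Real.exp 2 * Real.exp (-(z ^ 3 / 8))) (by positivity) fun i hi => by
    refine (psi_le_exp_neg _).trans ?_
    rw [← Real.exp_add]
    have := (marg_SL_bounds hD hE hB hI hT hlead hw hi).1
    gcongr
    linarith
  calc S.gsig t * S.wsig t r₀
      ≤ 3 * S.eta * S.alpha ^ 3 * (Real.exp 2 * Real.exp (-(z ^ 3 / 8))) * S.wsig t r₀ := by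
        gcongr
    _ = 3 * S.eta * S.alpha ^ 2 * Real.exp 2 * (z * Real.exp (-(z ^ 3 / 8))) := by
        rw [hz]; ring
    _ ≤ 3 * S.eta * S.alpha ^ 2 * (15 / 2) * 2 := by
        have := exp_two_lt.le
        have := mul_exp_neg_cube_le hz0
        gcongr
    _ ≤ 1 := by
        have := hB.rate_alpha
        have : 0 ≤ S.eta * S.alpha ^ 2 := by positivity
        nlinarith

/-- The signal level separating the early from the late stage. -/
def level (S : Setting) : ℝ := 1 / (S.alpha * (S.m : ℝ) ^ ((1 : ℝ) / 3))

lemma level_pos (S : Setting) : 0 < S.level := by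
  have hα := S.halpha
  have hm : (0 : ℝ) < S.m := Nat.cast_pos.2 S.hm
  unfold level; positivity

lemma le_gsig_of_le_level (hD : S.ATDyn) (hE : S.EventE) (hB : S.Bounds) {t : ℕ}
    (hI : S.LearnableSmall t) (hT : S.BelowThreshold t) {r₀ : Fin S.m} (hlead : S.Leading r₀ t)
    (hw : 0 < S.wsig t r₀) (hle : ¬ S.level < S.wsig t r₀) :
    S.eta * S.alpha ^ 3 / 48 ≤ S.gsig t := by
  have hα := S.halpha
  have hη := S.heta
  have hm : (0 : ℝ) < S.m := Nat.cast_pos.2 S.hm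
  have h1 : S.m * (S.alpha * S.wsig t r₀) ^ 3 ≤ 1 ^ 3 := by
    refine cube_le_of_cbrt_mul_le hm.le ?_
    have := not_lt.1 hle
    rw [level, le_div_iff₀ (by positivity)] at this
    linarith
  have hg := hB.le_gsig t (b := 1 / 9) (by norm_num) fun i hi => by
    refine le_trans ?_ (one_div_le_psi (M := 2) ?_)
    · have := exp_two_lt
      have := Real.exp_pos 2
      gcongr
      linarith
    · have := (marg_SL_bounds hD hE hB hI hT hlead hw hi).2
      linarith
  linarith

/-! ### Propagation of the smallness invariant -/

lemma BelowThreshold.of_le (hB : S.Bounds) {s t : ℕ} (hst : s ≤ t) (hT : S.BelowThreshold t) :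
    S.BelowThreshold s := by
  have hQ := S.qn_pos
  have := rhoHatMax_mono hB.two_le_P hB.nonempty_SU hst
  refine le_trans ?_ hT
  gcongr

lemma rhoHatMax_early_le (hD : S.ATDyn) (hE : S.EventE) (hB : S.Bounds) {t : ℕ}
    (hI : ∀ s < t, S.LearnableSmall s)
    (hcount : (t : ℝ) * (S.eta * S.alpha ^ 3 * S.sigma0) ≤ 192) :
    S.rhoHatMax t ≤ 18 * Real.sqrt S.lgT * S.sigma0 / S.qn := by
  have hQ := S.qn_pos
  have h0 := S.hsigma0
  have hα := S.halpha
  have hη := S.heta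
  have hN : (0 : ℝ) < S.N := Nat.cast_pos.2 S.hN
  have hL : 0 ≤ S.lgI := zero_le_one.trans hB.one_le_lgI
  have hR0 := hE.rhoHat_zero_le hB
  have hq4 : S.sigman ^ 4 * (S.d : ℝ) ^ 2 = S.qn ^ 4 := by
    rw [show S.qn ^ 4 = (S.qn ^ 2) ^ 2 by ring, qn_sq]; ring
  have hdouble : S.rhoHatMax t ≤ 2 * S.rhoHatMax 0 := by
    refine quadratic_growth_le_two_mul
      (β := 4800 * S.eta * S.sigman ^ 4 * (S.d : ℝ) ^ 2 * S.lgI / S.N) (by positivity)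
      (fun s => (hE.rhoHatMax_pos hB s).le)
      (fun s hs => rhoHatMax_succ_upper hD hE hB (hI s hs)) ?_
    have hpos : 0 < S.eta * S.alpha ^ 3 * S.sigma0 := by positivity
    have ht : (t : ℝ) ≤ 192 / (S.eta * S.alpha ^ 3 * S.sigma0) := by
      rwa [le_div_iff₀ hpos]
    have hRp := (hE.rhoHatMax_pos hB 0).le
    calc (t : ℝ) * (4 * (4800 * S.eta * S.sigman ^ 4 * (S.d : ℝ) ^ 2 * S.lgI / S.N) *
          S.rhoHatMax 0)
        ≤ 192 / (S.eta * S.alpha ^ 3 * S.sigma0) *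
          (4 * (4800 * S.eta * S.sigman ^ 4 * (S.d : ℝ) ^ 2 * S.lgI / S.N) *
          (4 * Real.sqrt S.lgI * S.sigma0 / S.qn)) := by gcongr
      _ = 14745600 * S.qn ^ 3 * (S.lgI * Real.sqrt S.lgI) / (S.N * S.alpha ^ 3) := by
          rw [show 4800 * S.eta * S.sigman ^ 4 * (S.d : ℝ) ^ 2 =
            4800 * S.eta * (S.sigman ^ 4 * (S.d : ℝ) ^ 2) by ring, hq4]
          field_simp
          ring
      _ ≤ 1 := by
          rw [div_le_one (by positivity)]
          exact hB.early_max
  calc S.rhoHatMax t ≤ 2 * (4 * Real.sqrt S.lgI * S.sigma0 / S.qn) := by linarith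
    _ = 8 * Real.sqrt S.lgI * S.sigma0 / S.qn := by ring
    _ ≤ 8 * (9 / 4 * Real.sqrt S.lgT) * S.sigma0 / S.qn := by
        have := hB.sqrt_lgI_le
        gcongr
    _ = _ := by ring

lemma early_term_le (hD : S.ATDyn) (hE : S.EventE) (hB : S.Bounds) {t : ℕ}
    (hI : ∀ s ≤ t, S.LearnableSmall s)
    (hcount : (t : ℝ) * (S.eta * S.alpha ^ 3 * S.sigma0) ≤ 192) {i : Fin S.N} (hi : i ∈ S.SL)
    {j : Fin S.P} (hj : j ≠ S.sig i) (r : Fin S.m) :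
    3 * S.eta / S.N * psi (S.marg t i) * dot (S.w t r) (S.x i j) ^ 2 ≤
      3 * S.eta / S.N * (81 * S.lgT * (S.sigma0 * S.qn) ^ 2) := by
  have hQ := S.qn_pos
  have h0 := S.hsigma0
  have hL : 0 ≤ S.lgT := zero_le_one.trans hB.one_le_lgT
  have hR := rhoHatMax_early_le hD hE hB (fun s hs => hI s hs.le) hcount
  have hRp := hE.rhoHatMax_pos hB t
  have hdot := abs_dot_noise_SL_le hD hE hB (hI t le_rfl) hi hj r
  have hle : |S.y i * dot (S.w t r) (S.x i j)| ≤ 9 * Real.sqrt S.lgT * (S.sigma0 * S.qn) := by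
    have hk : 4 * S.kap * S.qn ^ 2 * S.rhoHatMax t ≤
        4 * (1 / 1000) * S.qn ^ 2 * (18 * Real.sqrt S.lgT * S.sigma0 / S.qn) := by
      have := hB.kap_le
      gcongr
    have heq : 4 * (1 / 1000) * S.qn ^ 2 * (18 * Real.sqrt S.lgT * S.sigma0 / S.qn) =
        72 / 1000 * (Real.sqrt S.lgT * (S.sigma0 * S.qn)) := by
      field_simp; ring
    have : 0 ≤ Real.sqrt S.lgT * (S.sigma0 * S.qn) := by positivity
    linarith
  have hsq : dot (S.w t r) (S.x i j) ^ 2 ≤ 81 * S.lgT * (S.sigma0 * S.qn) ^ 2 := by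
    rw [abs_mul, S.abs_y, one_mul] at hle
    rw [← sq_abs]
    calc _ ≤ (9 * Real.sqrt S.lgT * (S.sigma0 * S.qn)) ^ 2 := by gcongr
      _ = _ := by rw [mul_pow, mul_pow, Real.sq_sqrt hL]; norm_num
  have := S.rate_nonneg
  calc _ ≤ 3 * S.eta / S.N * 1 * (81 * S.lgT * (S.sigma0 * S.qn) ^ 2) := by
        gcongr
        exact psi_le_one _
    _ = _ := by ring

lemma late_term_le (hD : S.ATDyn) (hE : S.EventE) (hB : S.Bounds) {s t : ℕ} (hst : s ≤ t)
    (hI : S.LearnableSmall s) {i : Fin S.N} (hi : i ∈ S.SL)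
    {j : Fin S.P} (hj : j ≠ S.sig i) (r : Fin S.m) :
    3 * S.eta / S.N * psi (S.marg s i) * dot (S.w s r) (S.x i j) ^ 2 ≤
      S.gsig s * (8 / S.alpha ^ 3 * (128 * S.lgT * (S.sigma0 * S.qn) ^ 2 +
        32 * S.kap ^ 2 * (S.qn ^ 2 * S.rhoHatMax t) ^ 2)) := by
  have hQ := S.qn_pos
  have h0 := S.hsigma0
  have hα := S.halpha
  have hL : 0 ≤ S.lgT := zero_le_one.trans hB.one_le_lgT
  have hRp := hE.rhoHatMax_pos hB s
  have hk := S.kap_nonneg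
  have hR := rhoHatMax_mono hB.two_le_P hB.nonempty_SU hst
  have hdot := abs_dot_noise_SL_le hD hE hB hI hi hj r
  have hsq : dot (S.w s r) (S.x i j) ^ 2 ≤ 128 * S.lgT * (S.sigma0 * S.qn) ^ 2 +
        32 * S.kap ^ 2 * (S.qn ^ 2 * S.rhoHatMax t) ^ 2 := by
    rw [abs_mul, S.abs_y, one_mul] at hdot
    rw [← sq_abs]
    calc _ ≤ (8 * Real.sqrt S.lgT * (S.sigma0 * S.qn) +
          4 * S.kap * S.qn ^ 2 * S.rhoHatMax t) ^ 2 := by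
          refine pow_le_pow_left₀ (abs_nonneg _) (hdot.trans ?_) 2
          gcongr
      _ ≤ 2 * (8 * Real.sqrt S.lgT * (S.sigma0 * S.qn)) ^ 2 +
          2 * (4 * S.kap * S.qn ^ 2 * S.rhoHatMax t) ^ 2 := by
          nlinarith [sq_nonneg (8 * Real.sqrt S.lgT * (S.sigma0 * S.qn) -
            4 * S.kap * S.qn ^ 2 * S.rhoHatMax t)]
      _ = _ := by rw [mul_pow _ (S.sigma0 * S.qn), mul_pow 8, Real.sq_sqrt hL]; ring
  have hg := hB.gsig_nonneg s
  calc _ ≤ (8 / S.alpha ^ 3 * S.gsig s) * (128 * S.lgT * (S.sigma0 * S.qn) ^ 2 +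
        32 * S.kap ^ 2 * (S.qn ^ 2 * S.rhoHatMax t) ^ 2) := by
        have := hB.rate_psi_le s hi
        gcongr
    _ = _ := by ring

lemma late_total_le (hE : S.EventE) (hB : S.Bounds) {t : ℕ} (hT : S.BelowThreshold t) :
    2 / S.level * (8 / S.alpha ^ 3 * (128 * S.lgT * (S.sigma0 * S.qn) ^ 2 +
        32 * S.kap ^ 2 * (S.qn ^ 2 * S.rhoHatMax t) ^ 2)) ≤
      S.sigma0 / (2 * S.qn) + S.kap * S.rhoHatMax t := by
  have hQ := S.qn_pos
  have h0 := S.hsigma0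
  have hα := S.halpha
  have hRp := hE.rhoHatMax_pos hB t
  have hk := S.kap_nonneg
  have hm : (0 : ℝ) < S.m := Nat.cast_pos.2 S.hm
  have hP : (1 : ℝ) ≤ S.P := Nat.one_le_cast.2 S.hP
  have hmR : (S.m : ℝ) ^ ((1 : ℝ) / 3) * (S.qn ^ 2 * S.rhoHatMax t) ≤ 1 := by
    refine le_trans ?_ hT
    gcongr
    nlinarith
  have heq : 2 / S.level * (8 / S.alpha ^ 3 * (128 * S.lgT * (S.sigma0 * S.qn) ^ 2 +
        32 * S.kap ^ 2 * (S.qn ^ 2 * S.rhoHatMax t) ^ 2)) =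
      (4096 * (S.m : ℝ) ^ ((1 : ℝ) / 3) * S.lgT * S.qn ^ 3 * S.sigma0) / S.alpha ^ 2 *
        (S.sigma0 / (2 * S.qn)) +
      (512 * S.kap * S.qn ^ 2) *
        ((S.m : ℝ) ^ ((1 : ℝ) / 3) * (S.qn ^ 2 * S.rhoHatMax t)) / S.alpha ^ 2 *
        (S.kap * S.rhoHatMax t) := by
    rw [level]
    field_simp
    ring
  rw [heq]
  refine add_le_add ?_ ?_
  · refine mul_le_of_le_one_left (by positivity) ?_
    rw [div_le_one (by positivity)]
    exact hB.late_init
  · refine mul_le_of_le_one_left (by positivity) ?_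
    rw [div_le_one (by positivity)]
    exact (mul_le_of_le_one_right (by positivity) hmR).trans hB.late_cross

lemma learnableSmall_of_forall_lt (hD : S.ATDyn) (hE : S.EventE) (hB : S.Bounds) {t : ℕ}
    (hT : S.BelowThreshold t) (hI : ∀ s < t, S.LearnableSmall s) : S.LearnableSmall t := by
  intro i hi j hj r
  have hQ := S.qn_pos
  have hσ := S.hsigma0
  have hα := S.halpha
  have hη := S.heta
  have hN : (0 : ℝ) < S.N := Nat.cast_pos.2 S.hN
  have hL : 0 ≤ S.lgT := zero_le_one.trans hB.one_le_lgT
  obtain ⟨r₀, h0, hlead⟩ := exists_leading hD hE hB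
  set w : ℕ → ℝ := fun s => S.wsig s r₀ with hwdef
  have hstep : ∀ s, w (s + 1) = w s + S.gsig s * w s ^ 2 := fun s => hD.wsig_succ s r₀
  have hw0 : 0 < w 0 := lt_of_lt_of_le (by positivity) h0
  have hpos : ∀ s, 0 < w s := quadratic_growth_pos hw0 hstep hB.gsig_nonneg
  have hmono : Monotone w := quadratic_growth_mono hstep hB.gsig_nonneg
  have hTs : ∀ s < t, S.BelowThreshold s := fun s hs => hT.of_le hB hs.le
  have hratio : ∀ s < t, S.gsig s * w s ≤ 1 := fun s hs =>
    gsig_mul_le_one hD hE hB (hI s hs) (hTs s hs) (hlead s) (hpos s)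
  have hrate : ∀ s < t, ¬ S.level < w s → S.eta * S.alpha ^ 3 / 48 ≤ S.gsig s := fun s hs hle =>
    le_gsig_of_le_level hD hE hB (hI s hs) (hTs s hs) (hlead s) (hpos s) hle
  have hcard : ∀ n ≤ t, (((Finset.range n).filter fun s => ¬ S.level < w s).card : ℝ) *
      (S.eta * S.alpha ^ 3 * S.sigma0) ≤ 192 := by
    intro n hn
    have h1 := card_below_mul_le hw0 hstep hB.gsig_nonneg (t := n) (θ := S.level)
      (fun s hs => hratio s (hs.trans_le hn)) (fun s hs => hrate s (hs.trans_le hn))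
    have h2 : 2 / w 0 ≤ 4 / S.sigma0 := by
      rw [div_le_div_iff₀ hw0 hσ]
      have : S.sigma0 / 2 ≤ w 0 := h0
      linarith
    have h3 := h1.trans h2
    rw [le_div_iff₀ hσ] at h3
    linarith
  have hcount : ∀ s < t, ¬ S.level < w s →
      (s : ℝ) * (S.eta * S.alpha ^ 3 * S.sigma0) ≤ 192 := by
    intro s hs hle
    have h1 := hcard s hs.le
    rwa [Finset.filter_true_of_mem, Finset.card_range] at h1
    intro a ha
    exact fun h => hle (h.trans_le (hmono (Finset.mem_range.1 ha).le))
  rw [rho_eq_sum, ← Finset.sum_filter_add_sum_filter_not _ fun s => S.level < w s]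
  have hlate : ∑ s ∈ (Finset.range t).filter (fun s => S.level < w s),
      3 * S.eta / S.N * psi (S.marg s i) * dot (S.w s r) (S.x i j) ^ 2 ≤
      S.sigma0 / (2 * S.qn) + S.kap * S.rhoHatMax t := by
    refine le_trans ?_ (late_total_le hE hB hT)
    refine le_trans (Finset.sum_le_sum fun s hs => late_term_le hD hE hB
      (Finset.mem_range.1 (Finset.mem_filter.1 hs).1).le
      (hI s (Finset.mem_range.1 (Finset.mem_filter.1 hs).1)) hi hj r) ?_
    rw [← Finset.sum_mul]
    refine mul_le_mul_of_nonneg_right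
      (sum_rate_above_le hw0 hstep hB.gsig_nonneg hratio S.level_pos) (by positivity)
  have hearly : ∑ s ∈ (Finset.range t).filter (fun s => ¬ S.level < w s),
      3 * S.eta / S.N * psi (S.marg s i) * dot (S.w s r) (S.x i j) ^ 2 ≤
      S.sigma0 / (2 * S.qn) := by
    refine (Finset.sum_le_card_nsmul _ _
      (3 * S.eta / S.N * (81 * S.lgT * (S.sigma0 * S.qn) ^ 2)) fun s hs => ?_).trans ?_
    · obtain ⟨hs1, hs2⟩ := Finset.mem_filter.1 hs
      have hst := Finset.mem_range.1 hs1
      exact early_term_le hD hE hB (fun a ha => hI a (ha.trans_lt hst)) (hcount s hst hs2) hi hj r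
    · rw [nsmul_eq_mul]
      have hc := hcard t le_rfl
      have hpos' : 0 < S.eta * S.alpha ^ 3 * S.sigma0 := by positivity
      rw [← le_div_iff₀ hpos'] at hc
      calc _ ≤ 192 / (S.eta * S.alpha ^ 3 * S.sigma0) *
            (3 * S.eta / S.N * (81 * S.lgT * (S.sigma0 * S.qn) ^ 2)) := by gcongr
        _ = (93312 * S.lgT * S.qn ^ 3) / (S.N * S.alpha ^ 3) * (S.sigma0 / (2 * S.qn)) := by
            field_simp
            ring
        _ ≤ _ := by
            refine mul_le_of_le_one_left (by positivity) ?_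
            rw [div_le_one (by positivity)]
            refine le_trans ?_ hB.early_noise
            gcongr
            norm_num
  have hsum : S.sigma0 / (2 * S.qn) + S.sigma0 / (2 * S.qn) = S.sigma0 / S.qn := by
    field_simp; norm_num
  linarith

lemma learnableSmall (hD : S.ATDyn) (hE : S.EventE) (hB : S.Bounds) (t : ℕ)
    (hT : S.BelowThreshold t) : S.LearnableSmall t := by
  induction t using Nat.strong_induction_on with
  | _ t ih =>
    exact learnableSmall_of_forall_lt hD hE hB hT fun s hs => ih s hs (hT.of_le hB hs.le)

/-! ### Consequences of Condition (H) -/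

/-- The logarithmic factor of the sparse regime. -/
def lgD (S : Setting) : ℝ := Real.log ((S.T : ℝ) * S.d * S.N * S.m * S.P / S.delta)

lemma le_div_delta {a : ℝ} (ha : 0 ≤ a) : a ≤ a / S.delta :=
  (le_div_iff₀ S.hdelta0).2 (mul_le_of_le_one_right ha S.hdelta1.le)

lemma T_pos_of_condH {C : ℝ} (h : S.CondH C) : 0 < S.T := by
  obtain ⟨h1, h2, -⟩ := h
  have := S.hN; have := S.heta; have := S.hsigma0; have := S.hsigman; have := S.hd
  have hpos : (0 : ℝ) < S.T := lt_of_lt_of_le (by positivity) h2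
  exact_mod_cast hpos

lemma lgT_le_lgD (hT : 0 < S.T) : S.lgT ≤ S.lgD := by
  have := S.hN; have := S.hm; have := S.hP; have := S.hdelta0
  have hd : (1 : ℝ) ≤ S.d := by exact_mod_cast S.hd
  refine Real.log_le_log (by positivity) ?_
  have : (S.T : ℝ) * S.N * S.m * S.P * 1 ≤ S.T * S.N * S.m * S.P * S.d := by gcongr
  refine div_le_div_of_nonneg_right ?_ S.hdelta0.le
  linarith

lemma log_d_le_lgD (hT : 0 < S.T) : Real.log S.d ≤ S.lgD := by
  have hd := S.hd; have := S.hN; have := S.hm; have := S.hP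
  refine Real.log_le_log (by positivity) ((?_ : (S.d : ℝ) ≤ _).trans (le_div_delta (by positivity)))
  have : S.d ≤ S.T * S.d * S.N * S.m * S.P :=
    Nat.le_of_dvd (by positivity) ⟨S.T * S.N * S.m * S.P, by ring⟩
  exact_mod_cast this

lemma log_two_le_lgD (hT : 0 < S.T) (hP : 2 ≤ S.P) : Real.log 2 ≤ S.lgD := by
  have := S.hd; have := S.hN; have := S.hm; have := S.hP
  refine Real.log_le_log (by norm_num) ((?_ : (2 : ℝ) ≤ _).trans (le_div_delta (by positivity)))
  have : S.P ≤ S.T * S.d * S.N * S.m * S.P := Nat.le_mul_of_pos_left _ (by positivity)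
  exact_mod_cast hP.trans this

lemma exp_one_le_N {C : ℝ} (hC : 10 ≤ C) (h : S.CondH C) (h' : S.SparseRegime C) :
    Real.exp 1 ≤ S.N := by
  have hT := T_pos_of_condH h
  obtain ⟨-, -, hN⟩ := h'
  have hP : 2 ≤ S.P := h.2.2.2.2.2.2.2.2.2.2.1
  have hl := log_two_le_lgD hT hP
  have hm : (1 : ℝ) ≤ S.m := by exact_mod_cast S.hm
  have hP' : (1 : ℝ) ≤ S.P := by exact_mod_cast S.hP
  have : C * S.m * S.P * S.lgD ≤ S.N := hN
  have h3 : (10 : ℝ) * 1 * 1 * Real.log 2 ≤ C * S.m * S.P * S.lgD := by gcongr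
  linarith [Real.log_two_gt_d9, Real.exp_one_lt_d9]

lemma one_le_lgT_of (hT : 0 < S.T) (hN : Real.exp 1 ≤ S.N) : 1 ≤ S.lgT := by
  have := S.hN; have := S.hm; have := S.hP; have := S.hdelta0
  rw [lgT, Real.le_log_iff_exp_le (by positivity)]
  refine hN.trans ((?_ : (S.N : ℝ) ≤ _).trans (le_div_delta (by positivity)))
  have : S.N ≤ S.T * S.N * S.m * S.P :=
    Nat.le_of_dvd (by positivity) ⟨S.T * S.m * S.P, by ring⟩
  exact_mod_cast this

lemma one_le_lgI_of (hN : Real.exp 1 ≤ S.N) : 1 ≤ S.lgI := by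
  have := S.hN; have := S.hm; have := S.hP; have := S.hdelta0
  rw [lgI, Real.le_log_iff_exp_le (by positivity)]
  refine hN.trans ((?_ : (S.N : ℝ) ≤ _).trans (le_div_delta (by positivity)))
  have : S.N ≤ 16 * S.N * S.m * S.P :=
    Nat.le_of_dvd (by positivity) ⟨16 * S.m * S.P, by ring⟩
  exact_mod_cast this

lemma log_sixteen_le : Real.log 16 ≤ 3 := by
  rw [show (16 : ℝ) = 2 ^ 4 by norm_num, Real.log_pow]
  push_cast
  linarith [Real.log_two_lt_d9]

lemma lgI_le_of (hT : 0 < S.T) (hL : 1 ≤ S.lgT) : S.lgI ≤ 5 * S.lgT := by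
  have := S.hN; have := S.hm; have := S.hP; have := S.hdelta0
  have hT1 : (1 : ℝ) ≤ S.T := by exact_mod_cast hT
  have hle : S.lgI ≤ Real.log (16 * (S.T * S.N * S.m * S.P / S.delta)) := by
    refine Real.log_le_log (by positivity) ?_
    rw [← mul_div_assoc]
    refine div_le_div_of_nonneg_right ?_ S.hdelta0.le
    have : (1 : ℝ) * (S.N * S.m * S.P) ≤ S.T * (S.N * S.m * S.P) := by gcongr
    linarith
  rw [Real.log_mul (by norm_num) (by positivity)] at hle
  have := log_sixteen_le
  change S.lgI ≤ Real.log 16 + S.lgT at hle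
  linarith

lemma log_pair_le (hT : 0 < S.T) (hL : 1 ≤ S.lgT) :
    Real.log ((16 : ℝ) * S.N ^ 2 * S.P ^ 2 / S.delta) ≤ 5 * S.lgT := by
  have := S.hN; have := S.hm; have := S.hP; have := S.hdelta0
  have hT1 : (1 : ℝ) ≤ S.T := by exact_mod_cast hT
  have hm1 : (1 : ℝ) ≤ S.m := by exact_mod_cast S.hm
  have hle : Real.log ((16 : ℝ) * S.N ^ 2 * S.P ^ 2 / S.delta) ≤
      Real.log (16 * (S.T * S.N * S.m * S.P / S.delta) ^ 2) := by
    refine Real.log_le_log (by positivity) ?_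
    have h1 : (S.N : ℝ) * S.P ≤ S.T * S.N * S.m * S.P := by
      have : (1 : ℝ) * S.N * 1 * S.P ≤ S.T * S.N * S.m * S.P := by gcongr
      linarith
    have h2 : S.delta ^ 2 ≤ S.delta := by nlinarith [S.hdelta1]
    calc _ = 16 * ((S.N : ℝ) * S.P) ^ 2 / S.delta := by ring
      _ ≤ 16 * ((S.T : ℝ) * S.N * S.m * S.P) ^ 2 / S.delta ^ 2 := by gcongr
      _ = _ := by rw [div_pow, mul_div_assoc]
  rw [Real.log_mul (by norm_num) (by positivity), Real.log_pow] at hle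
  have := log_sixteen_le
  change _ ≤ Real.log 16 + (2 : ℕ) * S.lgT at hle
  push_cast at hle
  linarith

lemma card_SL_add_card_SU (S : Setting) : (S.SL.card : ℝ) + S.SU.card = S.N := by
  have h := Finset.card_union_of_disjoint S.hdisj
  rw [S.hunion, Finset.card_univ, Fintype.card_fin] at h
  exact_mod_cast h.symm

lemma pun_mul_N (S : Setting) : S.pun * S.N = S.SU.card := by
  have : (S.N : ℝ) ≠ 0 := by exact_mod_cast S.hN.ne'
  rw [pun, div_mul_cancel₀ _ this]

lemma N_mul_one_sub_pun (S : Setting) : S.N * (1 - S.pun) = S.SL.card := by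
  linarith [S.card_SL_add_card_SU, S.pun_mul_N]

lemma card_SU_le {C : ℝ} (h' : S.SparseRegime C) : S.SU.card ≤ C⁻¹ * Real.log S.d := by
  have hN : (0 : ℝ) < S.N := by exact_mod_cast S.hN
  rw [← pun_mul_N, ← le_div_iff₀ hN]
  exact h'.2.1

lemma nonempty_SU_of {C : ℝ} (hC : 0 < C) (h' : S.SparseRegime C) : S.SU.Nonempty := by
  have hN : (0 : ℝ) < S.N := by exact_mod_cast S.hN
  have h : 0 < (S.SU.card : ℝ) := by
    rw [← pun_mul_N]
    exact mul_pos (lt_of_lt_of_le (by positivity) h'.1) hN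
  exact Finset.card_pos.1 (by exact_mod_cast h)

lemma N_le_two_mul_card_SL {C : ℝ} (hC : 2 ≤ C) (h : S.CondH C) (h' : S.SparseRegime C) :
    (S.N : ℝ) ≤ 2 * S.SL.card := by
  have hT := T_pos_of_condH h
  have h1 := card_SU_le h'
  have h2 := log_d_le_lgD hT
  have hm : (1 : ℝ) ≤ S.m := by exact_mod_cast S.hm
  have hP : (1 : ℝ) ≤ S.P := by exact_mod_cast S.hP
  have h3 : C * S.m * S.P * S.lgD ≤ S.N := h'.2.2
  have hd : 0 ≤ Real.log S.d := Real.log_natCast_nonneg _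
  have h4 : 2 * 1 * 1 * Real.log S.d ≤ C * S.m * S.P * S.lgD := by gcongr
  have h5 : C⁻¹ * Real.log S.d ≤ 1 * Real.log S.d := by
    gcongr; exact inv_le_one_of_one_le₀ (by linarith)
  linarith [S.card_SL_add_card_SU]

lemma mul_mul_le_of_le_min_div {a c q X l : ℝ} (hc : 0 ≤ c) (hX : 0 < X) (hl : 0 < l)
    (hq : q ≤ 1 / X) (h : a ≤ c * q / l) : a * X * l ≤ c := by
  rw [le_div_iff₀ hl] at h
  rw [le_div_iff₀ hX] at hq
  calc a * X * l = a * l * X := by ring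
    _ ≤ c * q * X := by gcongr
    _ = c * (q * X) := by ring
    _ ≤ c * 1 := by gcongr
    _ = c := mul_one c

lemma sqrt_d_ge {C K : ℝ} (hC : K ^ 2 = C) (h : S.CondH C) :
    K * (S.m * S.P * S.N * S.lgT ^ 2) ≤ Real.sqrt S.d := by
  refine Real.le_sqrt_of_sq_le (le_trans (le_of_eq ?_) h.2.2.1)
  rw [← hC, lgT]
  ring

lemma lam_mul_sqrt_d_le (hT : 0 < S.T) (hL : 1 ≤ S.lgT) :
    S.lam * Real.sqrt S.d ≤ 9 / 2 * Real.sqrt S.lgT := by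
  have hd : 0 < Real.sqrt S.d := Real.sqrt_pos.2 (Nat.cast_pos.2 S.hd)
  rw [lam, div_mul_cancel₀ _ hd.ne']
  have : Real.sqrt (Real.log ((16 : ℝ) * S.N ^ 2 * S.P ^ 2 / S.delta)) ≤
      9 / 4 * Real.sqrt S.lgT := by
    rw [Real.sqrt_le_left (by positivity), mul_pow, Real.sq_sqrt (by linarith)]
    linarith [log_pair_le hT hL]
  linarith

lemma kap_mul_sqrt_d_le (hT : 0 < S.T) (hL : 1 ≤ S.lgT) :
    S.kap * Real.sqrt S.d ≤ 270 * S.lgT * (S.P * S.SU.card) := by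
  have h := lam_mul_sqrt_d_le hT hL
  calc S.kap * Real.sqrt S.d
      = S.lam * Real.sqrt S.d * (S.SU.card * S.P * (60 * Real.sqrt S.lgT)) := by
        rw [kap]; ring
    _ ≤ 9 / 2 * Real.sqrt S.lgT * (S.SU.card * S.P * (60 * Real.sqrt S.lgT)) := by gcongr
    _ = 270 * Real.sqrt S.lgT ^ 2 * (S.P * S.SU.card) := by ring
    _ = _ := by rw [Real.sq_sqrt (by linarith)]

lemma sqrt_lgT_le (hL : 1 ≤ S.lgT) : Real.sqrt S.lgT ≤ S.lgT := by
  rw [Real.sqrt_le_left (by linarith)]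
  nlinarith

lemma card_SL_le_N (S : Setting) : (S.SL.card : ℝ) ≤ S.N := by
  linarith [S.card_SL_add_card_SU, Nat.cast_nonneg (α := ℝ) S.SU.card]

lemma card_SU_le_N (S : Setting) : (S.SU.card : ℝ) ≤ S.N := by
  linarith [S.card_SL_add_card_SU, Nat.cast_nonneg (α := ℝ) S.SL.card]

/-- The signal strength condition in product form. -/
lemma signal_strength {C : ℝ} (h : S.CondH C) (hSL : (S.N : ℝ) ≤ 2 * S.SL.card) :
    C * S.qn * S.lgT ≤ S.alpha * (S.SL.card : ℝ) ^ ((1 : ℝ) / 3) := by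
  have hα := h.2.2.2.1
  have hN : (0 : ℝ) < S.N := by exact_mod_cast S.hN
  have hb : 0 < (S.SL.card : ℝ) ^ ((1 : ℝ) / 3) := Real.rpow_pos_of_pos (by linarith) _
  rw [N_mul_one_sub_pun, div_le_iff₀ hb] at hα
  rw [qn, ← mul_assoc]
  exact hα

lemma signal_strength_cubed {C : ℝ} (h : S.CondH C) (hL : 1 ≤ S.lgT)
    (hSL : (S.N : ℝ) ≤ 2 * S.SL.card) :
    C ^ 3 * S.qn ^ 3 * S.lgT ^ 3 ≤ S.N * S.alpha ^ 3 := by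
  have hα := S.halpha
  have hQ := S.qn_pos
  have hC : 1 ≤ C := h.1
  have h1 := signal_strength h hSL
  have hb := cbrt_pow_three (Nat.cast_nonneg (α := ℝ) S.SL.card)
  have hle := S.card_SL_le_N
  calc _ = (C * S.qn * S.lgT) ^ 3 := by ring
    _ ≤ (S.alpha * (S.SL.card : ℝ) ^ ((1 : ℝ) / 3)) ^ 3 := by gcongr
    _ = S.SL.card * S.alpha ^ 3 := by rw [mul_pow, hb, mul_comm]
    _ ≤ _ := by gcongr

/-- A bound `c * qn² ≤ α²` follows from the signal strength condition as soon as
`c * |S_L|^{2/3}` is at most `C² lgT²`. -/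
lemma mul_qn_sq_le_alpha_sq {C c : ℝ} (h : S.CondH C) (hL : 1 ≤ S.lgT)
    (hSL : (S.N : ℝ) ≤ 2 * S.SL.card)
    (hc : c * ((S.SL.card : ℝ) ^ ((1 : ℝ) / 3)) ^ 2 ≤ C ^ 2 * S.lgT ^ 2) :
    c * S.qn ^ 2 ≤ S.alpha ^ 2 := by
  have hα := S.halpha
  have hQ := S.qn_pos
  have hC : 1 ≤ C := h.1
  have h1 := signal_strength h hSL
  have hN : (0 : ℝ) < S.N := by exact_mod_cast S.hN
  have hb : 0 < (S.SL.card : ℝ) ^ ((1 : ℝ) / 3) := Real.rpow_pos_of_pos (by linarith) _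
  refine le_of_mul_le_mul_right ?_ (pow_pos hb 2)
  calc _ = c * ((S.SL.card : ℝ) ^ ((1 : ℝ) / 3)) ^ 2 * S.qn ^ 2 := by ring
    _ ≤ C ^ 2 * S.lgT ^ 2 * S.qn ^ 2 := by gcongr
    _ = (C * S.qn * S.lgT) ^ 2 := by ring
    _ ≤ (S.alpha * (S.SL.card : ℝ) ^ ((1 : ℝ) / 3)) ^ 2 := by gcongr
    _ = _ := by ring

lemma cbrt_le_self {a : ℝ} (ha : 1 ≤ a) : a ^ ((1 : ℝ) / 3) ≤ a := by
  simpa using Real.rpow_le_rpow_of_exponent_le ha (show (1 : ℝ) / 3 ≤ 1 by norm_num)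

lemma cbrt_le_two_thirds {a : ℝ} (ha : 1 ≤ a) : a ^ ((1 : ℝ) / 3) ≤ a ^ ((2 : ℝ) / 3) :=
  Real.rpow_le_rpow_of_exponent_le ha (by norm_num)

lemma cbrt_sq_le_self {a : ℝ} (ha : 1 ≤ a) : (a ^ ((1 : ℝ) / 3)) ^ 2 ≤ a := by
  rw [← Real.rpow_natCast, ← Real.rpow_mul (by linarith)]
  simpa using Real.rpow_le_rpow_of_exponent_le ha (show (1 : ℝ) / 3 * (2 : ℕ) ≤ 1 by norm_num)

/-- If `a ≤ √x` then `a^{2/3} log x ≤ 6 √x`. -/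
lemma cbrt_sq_mul_log_le {a x : ℝ} (ha : 0 ≤ a) (hx : 1 ≤ x) (h : a ≤ Real.sqrt x) :
    (a ^ ((1 : ℝ) / 3)) ^ 2 * Real.log x ≤ 6 * Real.sqrt x := by
  have hs : 0 < Real.sqrt x := Real.sqrt_pos.2 (by linarith)
  set z := Real.sqrt x ^ ((1 : ℝ) / 3) with hz
  have hz0 : 0 < z := Real.rpow_pos_of_pos hs _
  have hz3 : z ^ 3 = Real.sqrt x := cbrt_pow_three hs.le
  have hlog : Real.log x ≤ 6 * z := by
    have h6 : x = z ^ 6 := by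
      rw [show z ^ 6 = (z ^ 3) ^ 2 by ring, hz3, Real.sq_sqrt (by linarith)]
    rw [h6, Real.log_pow]
    have := Real.log_le_sub_one_of_pos hz0
    push_cast
    linarith
  have haz : a ^ ((1 : ℝ) / 3) ≤ z := Real.rpow_le_rpow ha h (by norm_num)
  have : 0 ≤ a ^ ((1 : ℝ) / 3) := Real.rpow_nonneg ha _
  calc _ ≤ z ^ 2 * (6 * z) := by gcongr; exact Real.log_nonneg hx
    _ = 6 * Real.sqrt x := by rw [← hz3]; ring

lemma sqrt_two_lgI_le (hL : 1 ≤ S.lgT) (hI : S.lgI ≤ 5 * S.lgT) :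
    Real.sqrt (2 * S.lgI) ≤ 4 * S.lgT := by
  rw [Real.sqrt_le_left (by linarith)]
  nlinarith

lemma sigma0_noise {C : ℝ} (h : S.CondH C) (hl : 0 < S.lgD) :
    S.sigma0 * ((S.m : ℝ) ^ ((2 : ℝ) / 3) * (S.P : ℝ) ^ ((2 : ℝ) / 3) * S.sigman *
      Real.sqrt S.d) * S.lgD ≤ C⁻¹ := by
  have := S.hm; have := S.hP; have := S.hd; have := S.hsigman
  have hC : 0 ≤ C⁻¹ := inv_nonneg.2 (by linarith [h.1])
  exact mul_mul_le_of_le_min_div hC (by positivity) hl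
    ((min_le_left _ _).trans (min_le_left _ _)) h.2.2.2.2.1

lemma sigma0_signal {C : ℝ} (h : S.CondH C) (hl : 0 < S.lgD) :
    S.sigma0 * (S.alpha * (S.m : ℝ) ^ ((2 : ℝ) / 3)) * S.lgD ≤ C⁻¹ := by
  have := S.hm; have := S.halpha
  have hC : 0 ≤ C⁻¹ := inv_nonneg.2 (by linarith [h.1])
  exact mul_mul_le_of_le_min_div hC (by positivity) hl
    ((min_le_left _ _).trans (min_le_right _ _)) h.2.2.2.2.1

lemma sigma0_dim {C : ℝ} (h : S.CondH C) (hl : 0 < S.lgD) :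
    S.sigma0 * (S.sigman * S.m ^ 2 * Real.sqrt S.P * S.d) * S.lgD ≤ C⁻¹ := by
  have := S.hm; have := S.hP; have := S.hd; have := S.hsigman
  have hC : 0 ≤ C⁻¹ := inv_nonneg.2 (by linarith [h.1])
  exact mul_mul_le_of_le_min_div hC (by positivity) hl (min_le_right _ _) h.2.2.2.2.1

lemma eta_init {C : ℝ} (h : S.CondH C) (hl : 0 < S.lgT) :
    S.eta * (S.alpha ^ 3 * S.sigma0) * S.lgT ≤ C⁻¹ := by
  have := S.halpha; have := S.hsigma0
  have hC : 0 ≤ C⁻¹ := inv_nonneg.2 (by linarith [h.1])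
  exact mul_mul_le_of_le_min_div hC (by positivity) hl
    ((min_le_left _ _).trans (min_le_left _ _)) h.2.2.2.2.2.1

lemma eta_alpha {C : ℝ} (h : S.CondH C) (hl : 0 < S.lgT) :
    S.eta * S.alpha ^ 2 * S.lgT ≤ C⁻¹ := by
  have := S.halpha
  have hC : 0 ≤ C⁻¹ := inv_nonneg.2 (by linarith [h.1])
  exact mul_mul_le_of_le_min_div hC (by positivity) hl (min_le_right _ _) h.2.2.2.2.2.1

lemma bounds_of_condH (h : S.CondH (10 ^ 12)) (h' : S.SparseRegime (10 ^ 12)) : S.Bounds := by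
  have hT := T_pos_of_condH h
  have hexp := exp_one_le_N (by norm_num) h h'
  have hL := one_le_lgT_of hT hexp
  have hLD := lgT_le_lgD hT
  have hI1 := one_le_lgI_of hexp
  have hI := lgI_le_of hT hL
  have hSL := N_le_two_mul_card_SL (by norm_num) h h'
  have hm : (1 : ℝ) ≤ S.m := by exact_mod_cast S.hm
  have hP : (1 : ℝ) ≤ S.P := by exact_mod_cast S.hP
  have hN : (1 : ℝ) ≤ S.N := by exact_mod_cast S.hN
  have hd1 : (1 : ℝ) ≤ S.d := by exact_mod_cast S.hd
  have hd : 0 < Real.sqrt S.d := Real.sqrt_pos.2 (by linarith)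
  have hα := S.halpha
  have hη := S.heta
  have hσ := S.hsigma0
  have hσn := S.hsigman
  have hQ := S.qn_pos
  have hs := sqrt_lgT_le hL
  have hdim := sqrt_d_ge (K := 10 ^ 6) (by norm_num) h
  have hL2 : 1 ≤ S.lgT ^ 2 := one_le_pow₀ hL
  have hLL2 : S.lgT ≤ S.lgT ^ 2 := le_self_pow₀ hL (by norm_num)
  have hld := lam_mul_sqrt_d_le hT hL
  have hUN := S.card_SU_le_N
  have hm13 := cbrt_le_two_thirds hm
  have hP13 := cbrt_le_two_thirds hP
  have hkd := kap_mul_sqrt_d_le hT hL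
  have hb0 : 0 ≤ (S.SL.card : ℝ) ^ ((1 : ℝ) / 3) := by positivity
  have hbN : (S.SL.card : ℝ) ^ ((1 : ℝ) / 3) ≤ (S.N : ℝ) ^ ((1 : ℝ) / 3) :=
    Real.rpow_le_rpow (by positivity) S.card_SL_le_N (by norm_num)
  have hmN : (S.m : ℝ) * S.N ≤ Real.sqrt S.d := by
    have : (S.m : ℝ) * 1 * S.N * 1 ≤ S.m * S.P * S.N * S.lgT ^ 2 := by gcongr
    nlinarith
  have hcub := signal_strength_cubed h hL hSL
  have h2I := sqrt_two_lgI_le hL hI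
  refine
    { two_le_P := h.2.2.2.2.2.2.2.2.2.2.1
      nonempty_SU := nonempty_SU_of (by norm_num) h'
      one_le_lgT := hL
      one_le_lgI := hI1
      lgI_le := hI
      lam_le := ?_
      kap_le := ?_
      early_noise := ?_
      early_max := ?_
      late_init := ?_
      late_cross := ?_
      init_noise := ?_
      init_signal := ?_
      rate_alpha := ?_
      rate_init := ?_
      eps_le := ?_
      card_SL := hSL }
  · refine le_of_mul_le_mul_right ?_ hd
    have h1 : (1 : ℝ) * S.P * S.N * S.lgT ≤ S.m * S.P * S.N * S.lgT ^ 2 := by gcongr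
    calc S.lam * S.N * S.P * Real.sqrt S.d = S.lam * Real.sqrt S.d * (S.N * S.P) := by ring
      _ ≤ 9 / 2 * Real.sqrt S.lgT * (S.N * S.P) := by gcongr
      _ ≤ 9 / 2 * S.lgT * (S.N * S.P) := by gcongr
      _ ≤ 1 / 1000 * Real.sqrt S.d := by linarith
  · refine le_of_mul_le_mul_right (hkd.trans ?_) hd
    have h1 : (1 : ℝ) * S.P * S.N * S.lgT ≤ S.m * S.P * S.N * S.lgT ^ 2 := by gcongr
    calc _ ≤ 270 * S.lgT * (S.P * S.N) := by gcongr
      _ ≤ 1 / 1000 * Real.sqrt S.d := by linarith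
  · refine le_trans ?_ hcub
    have h3 : S.lgT ≤ S.lgT ^ 3 := le_self_pow₀ hL (by norm_num)
    calc _ = 100000 * S.qn ^ 3 * S.lgT := by ring
      _ ≤ _ := by gcongr; norm_num
  · refine le_trans ?_ hcub
    have hsI : Real.sqrt S.lgI ≤ 5 * S.lgT := by
      rw [Real.sqrt_le_left (by linarith)]
      nlinarith
    have h3 : S.lgT ^ 2 ≤ S.lgT ^ 3 := pow_le_pow_right₀ hL (by norm_num)
    calc _ ≤ 14745600 * S.qn ^ 3 * (5 * S.lgT * (5 * S.lgT)) := by gcongr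
      _ = 368640000 * S.qn ^ 3 * S.lgT ^ 2 := by ring
      _ ≤ _ := by gcongr; norm_num
  · rw [show 4096 * (S.m : ℝ) ^ ((1 : ℝ) / 3) * S.lgT * S.qn ^ 3 * S.sigma0 =
      4096 * (S.m : ℝ) ^ ((1 : ℝ) / 3) * S.lgT * S.qn * S.sigma0 * S.qn ^ 2 by ring]
    refine mul_qn_sq_le_alpha_sq h hL hSL ?_
    have hσd : S.qn * S.sigma0 * Real.sqrt S.d ≤ 1 := by
      have h1 := sigma0_dim h (by linarith)
      have hsP : 1 ≤ Real.sqrt S.P := Real.one_le_sqrt.2 hP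
      have hm2 : (1 : ℝ) ≤ S.m ^ 2 := one_le_pow₀ hm
      calc S.qn * S.sigma0 * Real.sqrt S.d
          = S.sigman * S.sigma0 * Real.sqrt S.d ^ 2 := by rw [qn]; ring
        _ = S.sigma0 * (S.sigman * 1 * 1 * S.d) * 1 := by
            rw [Real.sq_sqrt (by linarith)]; ring
        _ ≤ S.sigma0 * (S.sigman * S.m ^ 2 * Real.sqrt S.P * S.d) * S.lgD := by
            gcongr; linarith
        _ ≤ 1 := h1.trans (by norm_num)
    calc _ ≤ 4096 * S.m * S.lgT * S.qn * S.sigma0 * S.N := by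
          gcongr
          · exact cbrt_le_self hm
          · exact (pow_le_pow_left₀ hb0 hbN 2).trans (cbrt_sq_le_self hN)
      _ = 4096 * S.lgT * (S.qn * S.sigma0 * (S.m * S.N)) := by ring
      _ ≤ 4096 * S.lgT * (S.qn * S.sigma0 * Real.sqrt S.d) := by gcongr
      _ ≤ 4096 * S.lgT * 1 := by gcongr
      _ ≤ (10 ^ 12) ^ 2 * S.lgT ^ 2 := by linarith
  · refine mul_qn_sq_le_alpha_sq h hL hSL ?_
    refine le_of_mul_le_mul_right ?_ hd
    have hND : (S.N : ℝ) ≤ Real.sqrt S.d := by nlinarith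
    have hlog0 := Real.log_nonneg hd1
    have hPU : (S.P : ℝ) * S.SU.card ≤ Real.log S.d := by
      have hPC : (S.P : ℝ) ≤ 10 ^ 12 := h.2.2.2.2.2.2.2.2.2.2.2
      calc _ ≤ (10 ^ 12 : ℝ) * ((10 ^ 12)⁻¹ * Real.log S.d) := by
            gcongr; exact card_SU_le h'
        _ = _ := by ring
    have hlog := cbrt_sq_mul_log_le (Nat.cast_nonneg S.SL.card) hd1 (S.card_SL_le_N.trans hND)
    calc _ = 512 * ((S.SL.card : ℝ) ^ ((1 : ℝ) / 3)) ^ 2 * (S.kap * Real.sqrt S.d) := by ring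
      _ ≤ 512 * ((S.SL.card : ℝ) ^ ((1 : ℝ) / 3)) ^ 2 *
          (270 * S.lgT * (S.P * S.SU.card)) := by gcongr
      _ ≤ 512 * ((S.SL.card : ℝ) ^ ((1 : ℝ) / 3)) ^ 2 * (270 * S.lgT * Real.log S.d) := by
          gcongr
      _ = 138240 * S.lgT * (((S.SL.card : ℝ) ^ ((1 : ℝ) / 3)) ^ 2 * Real.log S.d) := by ring
      _ ≤ 138240 * S.lgT * (6 * Real.sqrt S.d) := by gcongr
      _ = 829440 * S.lgT * Real.sqrt S.d := by ring
      _ ≤ (10 ^ 12) ^ 2 * S.lgT ^ 2 * Real.sqrt S.d := by gcongr; norm_num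
  · have h1 := sigma0_noise h (by linarith)
    calc _ = 8 * (S.sigma0 * ((S.m : ℝ) ^ ((1 : ℝ) / 3) * (S.P : ℝ) ^ ((1 : ℝ) / 3) * S.sigman *
          Real.sqrt S.d) * Real.sqrt S.lgT) := by
          rw [Real.mul_rpow (by positivity) (by positivity), qn]; ring
      _ ≤ 8 * (S.sigma0 * ((S.m : ℝ) ^ ((2 : ℝ) / 3) * (S.P : ℝ) ^ ((2 : ℝ) / 3) * S.sigman *
          Real.sqrt S.d) * S.lgD) := by
          gcongr
          exact hs.trans hLD
      _ ≤ 8 * (10 ^ 12)⁻¹ := by gcongr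
      _ ≤ 1 / 2 := by norm_num
  · have h1 := sigma0_signal h (by linarith)
    calc _ = S.sigma0 * (S.alpha * (S.m : ℝ) ^ ((1 : ℝ) / 3)) * Real.sqrt (2 * S.lgI) := by ring
      _ ≤ S.sigma0 * (S.alpha * (S.m : ℝ) ^ ((2 : ℝ) / 3)) * (4 * S.lgD) := by
          gcongr
          linarith
      _ = 4 * (S.sigma0 * (S.alpha * (S.m : ℝ) ^ ((2 : ℝ) / 3)) * S.lgD) := by ring
      _ ≤ 4 * (10 ^ 12)⁻¹ := by gcongr
      _ ≤ 1 := by norm_num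
  · have h1 := eta_alpha h (by linarith)
    calc 50 * S.eta * S.alpha ^ 2 = 50 * (S.eta * S.alpha ^ 2 * 1) := by ring
      _ ≤ 50 * (S.eta * S.alpha ^ 2 * S.lgT) := by gcongr
      _ ≤ 50 * (10 ^ 12)⁻¹ := by gcongr
      _ ≤ 1 := by norm_num
  · have h1 := eta_init h (by linarith)
    calc _ = 6 * (S.eta * (S.alpha ^ 3 * S.sigma0) * Real.sqrt (2 * S.lgI)) := by ring
      _ ≤ 6 * (S.eta * (S.alpha ^ 3 * S.sigma0) * (4 * S.lgT)) := by gcongr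
      _ = 24 * (S.eta * (S.alpha ^ 3 * S.sigma0) * S.lgT) := by ring
      _ ≤ 24 * (10 ^ 12)⁻¹ := by gcongr
      _ ≤ 1 := by norm_num
  · have h1 := h.2.2.2.2.2.2.2.1
    have h2 : (10 ^ 12 : ℝ)⁻¹ * min S.alpha (1 / (S.m * S.sigma0 * S.d)) ≤
        (10 ^ 12)⁻¹ * S.alpha := by
      gcongr; exact min_le_left _ _
    linarith

end Setting

/-- Dynamics of the maximum shifted noise coefficient. On the event
`E`, under Condition (H) in the sparse-unlearnable regime, as long as
`ρ̂_max^{(t)} ≤ C₁/((mP)^{1/3} σ_n² d)`, the maximum shifted noise coefficient obeys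
the stated two-sided quadratic one-step growth bounds. -/
theorem stmt13 :
    ∃ C1 C : ℝ, 0 < C1 ∧ 0 < C ∧
      ∀ S : Setting, S.ATDyn → S.EventE → S.CondH C → S.SparseRegime C →
        ∀ t : ℕ,
          S.rhoHatMax t ≤ C1 / (((S.m : ℝ) * S.P) ^ ((1 : ℝ) / 3) * S.sigman ^ 2 * S.d) →
          S.rhoHatMax t +
              S.eta * S.sigman ^ 4 * (S.d : ℝ) ^ 2 /
                  (3 * S.N * (1 + Real.exp (4 * C1 ^ 3))) *
                (S.rhoHatMax t) ^ 2 ≤ S.rhoHatMax (t + 1) ∧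
          S.rhoHatMax (t + 1) ≤
            S.rhoHatMax t +
              4800 * S.eta * S.sigman ^ 4 * (S.d : ℝ) ^ 2 *
                  Real.log ((16 : ℝ) * S.N * S.m * S.P / S.delta) / S.N *
                (S.rhoHatMax t) ^ 2 := by
  refine ⟨1, 10 ^ 12, one_pos, by norm_num, fun S hD hE hC hR t ht => ?_⟩
  have hB := Setting.bounds_of_condH hC hR
  have hT : S.BelowThreshold t := by
    have hm := S.hm; have hP := S.hP; have hd := S.hd; have hσ := S.hsigman
    rw [le_div_iff₀ (by positivity)] at ht
    rw [Setting.BelowThreshold, S.qn_sq]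
    linarith
  have hI := Setting.learnableSmall hD hE hB t hT
  refine ⟨?_, Setting.rhoHatMax_succ_upper hD hE hB hI⟩
  simpa using Setting.rhoHatMax_succ_lower hD hE hB hI hT

end AD

end
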